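/- arXiv:2406.00331 — 3 statements merged into one kernel-verified Lean document; each statement's English description precedes it below -/
import Mathlib

section
/- For every positive integer k and every complex number s = σ + it with σ > 1/2 and s ≠ 1, the series Σ_{n ≥ -k} (-1)^n ℓ_{n,k} ((s-1)/s)^n converges absolutely and its sum equals ζ(s)^k. -/
open scoped Real Topology
open Complex Filter MeasureTheory Finset Asymptotics

/-- The analytic extension of `s ↦ ((s-1) * ζ(s))^k` to `s = 1` (where its value is `1`). -/
noncomputable def zetaPowAux (k : ℕ) : ℂ → ℂ :=
  Function.update (fun s : ℂ => ((s - 1) * riemannZeta s) ^ k) 1 1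

/-- `lam k j` is the Taylor coefficient `λ_{j,k}`, i.e. the `j`-th derivative at `s = 1` of the
analytic extension of `(s-1)^k ζ(s)^k`; these numbers are real, and we record their real part. -/
noncomputable def lam (k j : ℕ) : ℝ :=
  (iteratedDeriv j (zetaPowAux k) 1).re

/-- The Fourier coefficients `ℓ_{n,k}` for `n ≥ -k` (an integer index). -/
noncomputable def ell (k : ℕ) (n : ℤ) : ℝ :=
  if 1 ≤ n then
    (-1 : ℝ) ^ n.toNat *
      ∑ j ∈ Finset.Icc 1 n.toNat,
        ((n.toNat - 1).choose (j - 1) : ℝ) * lam k (j + k) / (Nat.factorial (j + k))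
  else
    (-1 : ℝ) ^ k *
      ∑ j ∈ Finset.range ((k + n).toNat + 1),
        ((k - j).choose (-n).toNat : ℝ) * (-1 : ℝ) ^ j * lam k j / (Nat.factorial j)

/-- The Lindelöf Hypothesis: `ζ(1/2 + it) = O(|t|^ε)` for every `ε > 0`. -/
def LindelofHypothesis : Prop :=
  ∀ ε : ℝ, 0 < ε → ∃ C : ℝ, ∀ t : ℝ, 1 ≤ |t| →
    ‖riemannZeta (1 / 2 + t * Complex.I)‖ ≤ C * |t| ^ ε

/-- `dk k n` is the Piltz divisor function `d_k(n)`: the number of representations of `n` as an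
ordered product of `k` positive integers (the `k`-th Dirichlet-convolution power of `ζ`). -/
noncomputable def dk (k n : ℕ) : ℕ := (ArithmeticFunction.zeta ^ k) n

/-- The coefficients `a_{j,k}` of the polynomial `P_k`. -/
noncomputable def aCoef (k j : ℕ) : ℝ :=
  (-1 : ℝ) ^ (k - 1 - j) *
    ∑ i ∈ Finset.range (k - 1 - j + 1), (-1 : ℝ) ^ i * lam k i / (Nat.factorial i)

/-- The error term `Δ_k(x) = (Σ_{1 ≤ n ≤ x} d_k(n)) - x P_k(log x)` in the Piltz divisor
problem. -/
noncomputable def Deltak (k : ℕ) (x : ℝ) : ℝ :=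
  (∑ n ∈ Finset.Icc 1 ⌊x⌋₊, (dk k n : ℝ)) -
    x * ∑ j ∈ Finset.range k, aCoef k j / (Nat.factorial j) * (Real.log x) ^ j

/-- The `n`-th Laguerre polynomial. -/
noncomputable def laguerre (n : ℕ) (u : ℝ) : ℝ :=
  ∑ j ∈ Finset.range (n + 1), (n.choose j : ℝ) * (-1 : ℝ) ^ j * u ^ j / (Nat.factorial j)

/-- The Bessel function of the first kind of order `0`. -/
noncomputable def besselJ0 (u : ℝ) : ℝ :=
  ∑' m : ℕ, (-1 : ℝ) ^ m * (u / 2) ^ (2 * m) / ((Nat.factorial m : ℝ) ^ 2)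

/-- `φ_k(x) = ∫_1^∞ Δ_k(r) J₀(2 √(x log r)) r⁻² dr`. -/
noncomputable def phik (k : ℕ) (x : ℝ) : ℝ :=
  ∫ r in Set.Ioi (1 : ℝ), Deltak k r * besselJ0 (2 * Real.sqrt (x * Real.log r)) / r ^ 2

/-!
Put `z = (s - 1) / s`, so that `1 - z = 1 / s` and `s = 1 + z / (1 - z)`; the half-plane
`1 / 2 < re s` is the disc `‖z‖ < 1`. Substituting `s - 1 = z / (1 - z)` in the Taylor series at `1`
of the entire function `F(s) = ((s - 1) ζ(s)) ^ k` and expanding each `(1 - z) ^ (k - j)` by the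
binomial series gives the power series of `(1 - z) ^ k * F(1 + z / (1 - z)) = (z ζ(s)) ^ k`, whose
`m`-th coefficient is `(-1) ^ (m - k) * ℓ_{m-k,k}`. The rearrangement is legitimate because the
coefficients of `(1 - z) ^ (k - j)` are nonnegative for `j ≥ k`, so that taking absolute values only
replaces `z` by `‖z‖`, and the Taylor series of `F` converges absolutely at `‖z‖ / (1 - ‖z‖)`.
-/

open scoped ComplexConjugate Nat

section Multichoose

theorem multichoose_neg_natCast (n i : ℕ) :
    Ring.multichoose (-(n : ℤ)) i = (-1) ^ i * n.choose i := by
  have h : (n.choose i : ℤ) = (-1) ^ i * Ring.multichoose (-(n : ℤ)) i := by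
    rw [← Ring.choose_natCast, ← neg_neg (n : ℤ), Ring.choose_neg', neg_neg, Units.smul_def,
      Int.coe_negOnePow_natCast, smul_eq_mul]
  rw [h, ← mul_assoc, ← mul_pow]
  simp

theorem multichoose_natCast_add_one (n i : ℕ) :
    Ring.multichoose ((n : ℤ) + 1) i = (n + i).choose n := by
  rw [Ring.multichoose_eq, show (n : ℤ) + 1 + i - 1 = (n + i : ℕ) by push_cast; ring,
    Ring.choose_natCast, Nat.choose_symm_add]

theorem multichoose_nonneg {n : ℤ} (hn : 0 ≤ n) (i : ℕ) : 0 ≤ Ring.multichoose n i := by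
  lift n to ℕ using hn
  exact Int.natCast_nonneg _

theorem hasSum_multichoose_mul_pow (n : ℤ) {z : ℂ} (hz : ‖z‖ < 1) :
    HasSum (fun i : ℕ => ((Ring.multichoose n i : ℤ) : ℂ) * z ^ i) ((1 - z) ^ (-n)) := by
  have hmem : z ∈ Metric.eball (0 : ℂ) 1 := by
    rwa [← ENNReal.ofReal_one, Metric.eball_ofReal, mem_ball_zero_iff]
  have h := (one_div_one_sub_cpow_hasFPowerSeriesOnBall_zero n).hasSum hmem
  rw [zero_add, cpow_intCast, one_div, ← zpow_neg] at h
  refine h.congr_fun fun i => ?_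
  rw [FormalMultilinearSeries.ofScalars_apply_eq, ← Ring.multichoose_eq, smul_eq_mul,
    ← eq_intCast (Int.castRingHom ℂ), Ring.map_multichoose, eq_intCast]

theorem tsum_norm_multichoose_mul_pow {n : ℤ} (hn : 0 ≤ n) {z : ℂ} (hz : ‖z‖ < 1) :
    ∑' i : ℕ, ‖((Ring.multichoose n i : ℤ) : ℂ) * z ^ i‖ = (1 - ‖z‖) ^ (-n) := by
  have h := hasSum_multichoose_mul_pow n (z := (‖z‖ : ℂ)) (by simpa using hz)
  norm_cast at h
  rw [← h.tsum_eq]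
  refine tsum_congr fun i => ?_
  rw [norm_mul, norm_pow, norm_intCast, abs_of_nonneg (mod_cast multichoose_nonneg hn i)]

end Multichoose

section EulerTransform

/-- The `m`-th coefficient of the formal power series
`(1 - X) ^ k * ∑ j, a j * (X / (1 - X)) ^ j`, an Euler transform of the sequence `a`. Here
`Ring.multichoose (j - k) i` is the `i`-th coefficient of `(1 - X) ^ (k - j)`. -/
def eulerTransform {R : Type*} [Ring R] (k : ℤ) (a : ℕ → R) (m : ℕ) : R :=
  ∑ p ∈ antidiagonal m, a p.1 * (Ring.multichoose ((p.1 : ℤ) - k) p.2 : ℤ)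

theorem map_eulerTransform {R S : Type*} [Ring R] [Ring S] (f : R →+* S) (k : ℤ) (a : ℕ → R)
    (m : ℕ) : f (eulerTransform k a m) = eulerTransform k (fun j => f (a j)) m := by
  simp [eulerTransform]

theorem hasSum_sum_antidiagonal {A α : Type*} [AddMonoid A] [HasAntidiagonal A]
    [AddCommMonoid α] [TopologicalSpace α] [ContinuousAdd α] [RegularSpace α]
    {f : A × A → α} {a : α} (hf : HasSum f a) :
    HasSum (fun m : A => ∑ p ∈ antidiagonal m, f p) a := by
  rw [← HasAntidiagonal.sigmaAntidiagonalEquivProd.hasSum_iff] at hf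
  refine hf.sigma fun m => ?_
  rw [← sum_coe_sort]
  exact hasSum_fintype _

variable {a : ℕ → ℂ} {z : ℂ}

theorem summable_mul_multichoose_mul_pow (k : ℤ) (hz : ‖z‖ < 1)
    (ha : Summable fun j => ‖a j‖ * (‖z‖ / (1 - ‖z‖)) ^ j) :
    Summable fun p : ℕ × ℕ =>
      a p.1 * z ^ p.1 * ((Ring.multichoose ((p.1 : ℤ) - k) p.2 : ℤ) * z ^ p.2) := by
  refine Summable.of_norm ((summable_prod_of_nonneg fun _ => norm_nonneg _).mpr ?_)
  simp only [norm_mul (a _ * _), tsum_mul_left]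
  refine ⟨fun j => (hasSum_multichoose_mul_pow _ hz).summable.norm.mul_left _, ?_⟩
  have hpos : 1 - ‖z‖ ≠ 0 := (sub_pos.mpr hz).ne'
  refine (ha.mul_left ((1 - ‖z‖) ^ k)).congr_atTop ?_
  filter_upwards [eventually_ge_atTop k.toNat] with j hj
  rw [tsum_norm_multichoose_mul_pow (by omega) hz, neg_sub, zpow_sub₀ hpos, zpow_natCast,
    norm_mul, norm_pow, div_pow]
  ring

theorem hasSum_eulerTransform_mul_pow (k : ℤ) (hz : ‖z‖ < 1)
    (ha : Summable fun j => ‖a j‖ * (‖z‖ / (1 - ‖z‖)) ^ j) :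
    HasSum (fun m => eulerTransform k a m * z ^ m)
      ((1 - z) ^ k * ∑' j, a j * (z / (1 - z)) ^ j) := by
  have hz1 : 1 - z ≠ 0 := sub_ne_zero.mpr fun h => by simp [← h] at hz
  have hdouble := (summable_mul_multichoose_mul_pow k hz ha).hasSum
  have hrows := hdouble.prod_fiberwise fun j =>
    (hasSum_multichoose_mul_pow ((j : ℤ) - k) hz).mul_left (a j * z ^ j)
  have hrow (j : ℕ) : a j * z ^ j * (1 - z) ^ (-((j : ℤ) - k)) =
      (1 - z) ^ k * (a j * (z / (1 - z)) ^ j) := by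
    rw [neg_sub, zpow_sub₀ hz1, zpow_natCast, div_pow]
    ring
  rw [← tsum_mul_left, ← tsum_congr hrow, hrows.tsum_eq]
  refine (hasSum_sum_antidiagonal hdouble).congr_fun fun m => ?_
  rw [eulerTransform, sum_mul]
  refine sum_congr rfl fun p hp => ?_
  rw [← mem_antidiagonal.mp hp, pow_add]
  ring

theorem hasSum_eulerTransform_taylor_of_entire {f : ℂ → ℂ} (hf : Differentiable ℂ f) (c : ℂ)
    (k : ℤ) (hz : ‖z‖ < 1) :
    HasSum (fun m => eulerTransform k (fun j => iteratedDeriv j f c / j !) m * z ^ m)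
      ((1 - z) ^ k * f (c + z / (1 - z))) := by
  have htaylor (w : ℂ) : HasSum (fun j => iteratedDeriv j f c / j ! * w ^ j) (f (c + w)) := by
    refine (hasSum_taylorSeries_of_entire hf c (c + w)).congr_fun fun j => ?_
    rw [add_sub_cancel_left, smul_eq_mul, smul_eq_mul]
    ring
  rw [← (htaylor (z / (1 - z))).tsum_eq]
  refine hasSum_eulerTransform_mul_pow k hz ?_
  refine (htaylor (‖z‖ / (1 - ‖z‖) : ℝ)).summable.norm.congr fun j => ?_
  rw [norm_mul, norm_pow, norm_real,
    Real.norm_of_nonneg (div_nonneg (norm_nonneg z) (sub_nonneg.mpr hz.le))]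

theorem norm_sub_one_div_self_lt_one {s : ℂ} (hs : 1 / 2 < s.re) : ‖(s - 1) / s‖ < 1 := by
  have h0 : s ≠ 0 := ne_zero_of_re_pos (one_half_pos.trans hs)
  rw [norm_div, div_lt_one (norm_pos_iff.mpr h0), ← sq_lt_sq₀ (norm_nonneg _) (norm_nonneg _),
    Complex.sq_norm, Complex.sq_norm, normSq_apply, normSq_apply, sub_re, sub_im, one_re, one_im]
  linarith

theorem hasSum_eulerTransform_taylor_one_of_entire {f : ℂ → ℂ} (hf : Differentiable ℂ f) (k : ℤ)
    {s : ℂ} (hs : 1 / 2 < s.re) :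
    HasSum (fun m => eulerTransform k (fun j => iteratedDeriv j f 1 / j !) m * ((s - 1) / s) ^ m)
      (f s / s ^ k) := by
  have h0 : s ≠ 0 := ne_zero_of_re_pos (one_half_pos.trans hs)
  have hsub : 1 - (s - 1) / s = s⁻¹ := by field_simp; ring
  have hadd : 1 + (s - 1) / s / s⁻¹ = s := by field_simp; ring
  have h := hasSum_eulerTransform_taylor_of_entire hf 1 k (norm_sub_one_div_self_lt_one hs)
  rwa [hsub, hadd, inv_zpow, inv_mul_eq_div] at h

end EulerTransform

section Zeta

theorem iteratedDeriv_conj_comp_conj {𝕜 : Type*} [RCLike 𝕜] (f : 𝕜 → 𝕜) (j : ℕ) :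
    iteratedDeriv j (conj ∘ f ∘ conj) = conj ∘ iteratedDeriv j f ∘ conj := by
  induction j with
  | zero => simp
  | succ j ih => rw [iteratedDeriv_succ, iteratedDeriv_succ, ih, deriv_conj_conj]

theorem zetaPowAux_of_ne_one (k : ℕ) {s : ℂ} (hs : s ≠ 1) :
    zetaPowAux k s = ((s - 1) * riemannZeta s) ^ k :=
  Function.update_of_ne hs _ _

theorem zetaPowAux_eq_riemannZeta₁_pow (k : ℕ) : zetaPowAux k = riemannZeta₁ ^ k := by
  ext s
  rcases eq_or_ne s 1 with rfl | hs
  · simp [zetaPowAux]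
  · have hs' : s - 1 ≠ 0 := sub_ne_zero.mpr hs
    rw [zetaPowAux_of_ne_one k hs, riemannZeta_eq_inv_sub_mul hs, mul_inv_cancel_left₀ hs',
      Pi.pow_apply]

theorem differentiable_zetaPowAux (k : ℕ) : Differentiable ℂ (zetaPowAux k) := by
  rw [zetaPowAux_eq_riemannZeta₁_pow]
  exact differentiable_riemannZeta₁.pow k

theorem conj_comp_zetaPowAux_comp_conj (k : ℕ) :
    conj ∘ zetaPowAux k ∘ conj = zetaPowAux k := by
  ext s
  rcases eq_or_ne s 1 with rfl | hs
  · simp [zetaPowAux]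
  · have hs' : conj s ≠ 1 := (map_ne_one_iff _ (starRingEnd ℂ).injective).mpr hs
    simp [zetaPowAux_of_ne_one k hs, zetaPowAux_of_ne_one k hs', riemannZeta_conj]

theorem ofReal_lam (k j : ℕ) : (lam k j : ℂ) = iteratedDeriv j (zetaPowAux k) 1 := by
  have h := congrFun (iteratedDeriv_conj_comp_conj (zetaPowAux k) j) 1
  rw [conj_comp_zetaPowAux_comp_conj] at h
  exact conj_eq_iff_re.mp (by simpa using h.symm)

end Zeta

section Ell

theorem neg_one_zpow_mul_ell_of_le {k m : ℕ} (hmk : m ≤ k) :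
    (-1 : ℝ) ^ ((m : ℤ) - k) * ell k ((m : ℤ) - k) =
      eulerTransform k (fun j => lam k j / j !) m := by
  have hn : ¬ (1 : ℤ) ≤ m - k := by omega
  have hk : ((k : ℤ) + (m - k)).toNat = m := by omega
  have hneg : (-((m : ℤ) - k)).toNat = k - m := by omega
  rw [ell, if_neg hn, hk, hneg, ← mul_assoc, ← zpow_natCast (-1 : ℝ) k,
    ← zpow_add₀ (by norm_num), sub_add_cancel, zpow_natCast, mul_sum, eulerTransform,
    Nat.sum_antidiagonal_eq_sum_range_succ_mk]
  refine sum_congr rfl fun j hj => ?_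
  have hjm : j ≤ m := Nat.lt_succ_iff.mp (mem_range.mp hj)
  have hchoose : (k - j).choose (m - j) = (k - j).choose (k - m) :=
    Nat.choose_symm_of_eq_add (by omega)
  have hsign : (-1 : ℝ) ^ m = (-1) ^ (m - j) * (-1) ^ j := by
    rw [← pow_add, Nat.sub_add_cancel hjm]
  have hsq : (-1 : ℝ) ^ j * (-1) ^ j = 1 := by rw [← mul_pow]; simp
  rw [show (j : ℤ) - k = -((k - j : ℕ) : ℤ) by omega, multichoose_neg_natCast, hchoose, hsign]
  push_cast
  linear_combination (-1 : ℝ) ^ (m - j) * (k - j).choose (k - m) * lam k j / j ! * hsq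

theorem neg_one_zpow_mul_ell_natCast_add_one (k d : ℕ) :
    (-1 : ℝ) ^ ((d : ℤ) + 1) * ell k (d + 1) =
      ∑ i ∈ range (d + 1), (d.choose i : ℝ) * lam k (k + 1 + i) / (k + 1 + i)! := by
  have hn : (1 : ℤ) ≤ d + 1 := by omega
  have hd : ((d : ℤ) + 1).toNat = d + 1 := by omega
  rw [ell, if_pos hn, hd, ← mul_assoc, ← Nat.cast_add_one, zpow_natCast, ← mul_pow, neg_mul_neg,
    one_mul, one_pow, one_mul, ← Ico_add_one_right_eq_Icc, sum_Ico_eq_sum_range,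
    Nat.add_sub_cancel, Nat.add_sub_cancel]
  refine sum_congr rfl fun i _ => ?_
  rw [Nat.add_sub_cancel_left, show 1 + i + k = k + 1 + i by omega]

theorem eulerTransform_natCast_add_one_add {R : Type*} [Ring R] (a : ℕ → R) (k d : ℕ) :
    eulerTransform k a (k + 1 + d) = ∑ i ∈ range (d + 1), a (k + 1 + i) * (d.choose i : R) := by
  rw [eulerTransform, Nat.sum_antidiagonal_eq_sum_range_succ_mk, Nat.succ_eq_add_one, add_assoc,
    sum_range_add, sum_eq_zero (s := range (k + 1)), zero_add]
  · refine sum_congr rfl fun i hi => ?_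
    have hid : i ≤ d := Nat.lt_succ_iff.mp (mem_range.mp hi)
    rw [show ((k + 1 + i : ℕ) : ℤ) - k = i + 1 by push_cast; ring, multichoose_natCast_add_one,
      show i + (k + 1 + d - (k + 1 + i)) = d by omega, Int.cast_natCast]
  · intro j hj
    have hjk : j ≤ k := Nat.lt_succ_iff.mp (mem_range.mp hj)
    rw [show (j : ℤ) - k = -((k - j : ℕ) : ℤ) by omega, multichoose_neg_natCast,
      Nat.choose_eq_zero_of_lt (by omega)]
    simp

theorem neg_one_zpow_mul_ell (k m : ℕ) :
    (-1 : ℝ) ^ ((m : ℤ) - k) * ell k ((m : ℤ) - k) =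
      eulerTransform k (fun j => lam k j / j !) m := by
  rcases le_or_gt m k with hmk | hkm
  · exact neg_one_zpow_mul_ell_of_le hmk
  · obtain ⟨d, rfl⟩ := Nat.exists_eq_add_of_le hkm
    rw [show ((k + 1 + d : ℕ) : ℤ) - k = d + 1 by push_cast; ring,
      neg_one_zpow_mul_ell_natCast_add_one, eulerTransform_natCast_add_one_add]
    exact sum_congr rfl fun i _ => by ring

theorem neg_one_zpow_mul_ofReal_ell (k m : ℕ) :
    (-1 : ℂ) ^ ((m : ℤ) - k) * (ell k ((m : ℤ) - k) : ℂ) =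
      eulerTransform k (fun j => iteratedDeriv j (zetaPowAux k) 1 / j !) m := by
  have h := congrArg ofRealHom (neg_one_zpow_mul_ell k m)
  rw [map_eulerTransform] at h
  simpa [ofReal_lam] using h

theorem hasSum_ell (k : ℕ) {s : ℂ} (hs : 1 / 2 < s.re) (hs1 : s ≠ 1) :
    HasSum (fun m : ℕ => (-1 : ℂ) ^ ((m : ℤ) - k) * (ell k ((m : ℤ) - k) : ℂ) *
      ((s - 1) / s) ^ ((m : ℤ) - k)) (riemannZeta s ^ k) := by
  have h0 : s ≠ 0 := ne_zero_of_re_pos (one_half_pos.trans hs)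
  have h1 : s - 1 ≠ 0 := sub_ne_zero.mpr hs1
  have hsum := (hasSum_eulerTransform_taylor_one_of_entire (differentiable_zetaPowAux k) k
    hs).div_const (((s - 1) / s) ^ k)
  have hval : zetaPowAux k s / s ^ (k : ℤ) / ((s - 1) / s) ^ k = riemannZeta s ^ k := by
    rw [zetaPowAux_of_ne_one k hs1, zpow_natCast, mul_pow, div_pow]
    field_simp
  rw [hval] at hsum
  refine hsum.congr_fun fun m => ?_
  rw [neg_one_zpow_mul_ofReal_ell, zpow_sub₀ (div_ne_zero h1 h0), zpow_natCast, zpow_natCast,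
    mul_div_assoc]

end Ell

theorem stmt0 (k : ℕ) (hk : 0 < k) (s : ℂ) (hs : 1 / 2 < s.re) (hs1 : s ≠ 1) :
    (Summable fun m : ℕ =>
      ‖(-1 : ℂ) ^ ((m : ℤ) - k) * (ell k ((m : ℤ) - k) : ℂ) *
        ((s - 1) / s) ^ ((m : ℤ) - k)‖) ∧
    ∑' m : ℕ, (-1 : ℂ) ^ ((m : ℤ) - k) * (ell k ((m : ℤ) - k) : ℂ) *
        ((s - 1) / s) ^ ((m : ℤ) - k) = riemannZeta s ^ k := by
  have h := hasSum_ell k hs hs1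
  exact ⟨h.summable.norm, h.tsum_eq⟩
end

section
/- The Lindelöf Hypothesis holds if and only if, for every positive integer k, the sequence (ℓ_{n,k})_{n ≥ -k} is square-summable, i.e. Σ_{n ≥ -k} ℓ_{n,k}² < ∞. -/
open scoped Real Topology
open Complex Filter MeasureTheory Finset Asymptotics

/-!
The map `w = 1 - 1 / s` carries the half-plane `1 / 2 < re s` onto the unit disc. Put
`ζ₁(s) = (s - 1) ζ(s)`; since `|s - 1| = |s|` on the critical line, the function `ζ₁(s) / s` has
modulus `|ζ(s)|` there. Read in the disc coordinate it becomes a holomorphic function `F(w)`, and up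
to sign the numbers `ℓ_{n,k}` are the Taylor coefficients of `F ^ k` at `0`. Their
square-summability therefore says that `F ^ k` lies in the Hardy space `H²`.

If `F ^ k` is in `H²`, point evaluation at distance `1 / T` to the right of `s₀ = 1 / 2 + i T`,
and a derivative bound that moves back to `s₀`, give `ζ(s₀) = O(T ^ (3 / (2 k)))`; now let `k` grow.
Conversely, under the Lindelöf Hypothesis the Phragmén–Lindelöf principle spreads the bound on
the critical line to `F(w) = O(|1 - w| ^ (-ε))` in the disc, and for `ε k < 1 / 2` the `k`-th power
of this bound is square integrable over circles, uniformly in the radius.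
-/

open scoped ComplexConjugate

section TaylorCoefficients

variable {𝕜 : Type*} [NontriviallyNormedField 𝕜] [CompleteSpace 𝕜]

lemma iteratedDeriv_zero_of_hasSum {a : ℕ → 𝕜} {f : 𝕜 → 𝕜}
    (hf : ∀ᶠ w in 𝓝 0, HasSum (fun m => a m * w ^ m) (f w)) (m : ℕ) :
    iteratedDeriv m f 0 = m.factorial * a m := by
  have hseries : HasFPowerSeriesAt f (FormalMultilinearSeries.ofScalars 𝕜 a) 0 := by
    rw [hasFPowerSeriesAt_iff]
    filter_upwards [hf] with w hw
    simpa [mul_comm] using hw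
  obtain ⟨r, hr⟩ := hseries
  rw [iteratedDeriv_eq_iteratedFDeriv, ← hr.factorial_smul 1 m]
  simp

variable [CharZero 𝕜]

lemma iteratedDeriv_pow_mul_eq_zero {u R : 𝕜 → 𝕜} {z : 𝕜} (hu : AnalyticAt 𝕜 u z)
    (hR : AnalyticAt 𝕜 R z) (hz : u z = 0) {m n : ℕ} (hmn : m < n) :
    iteratedDeriv m (fun x => u x ^ n * R x) z = 0 := by
  have hu_order : 1 ≤ analyticOrderAt u z := by
    rw [Order.one_le_iff_ne_zero]
    exact fun h => hu.analyticOrderAt_eq_zero.mp h hz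
  have han : AnalyticAt 𝕜 (u ^ n * R) z := (hu.pow n).mul hR
  refine (natCast_le_analyticOrderAt_iff_iteratedDeriv_eq_zero han).mp ?_ m hmn
  rw [analyticOrderAt_mul (hu.pow n) hR, analyticOrderAt_pow hu]
  calc (n : ℕ∞) = n • 1 := by simp
    _ ≤ n • analyticOrderAt u z := by gcongr
    _ ≤ _ := le_self_add

lemma iteratedDeriv_mul_comp {g G u : 𝕜 → 𝕜} {z : 𝕜} (hg : AnalyticAt 𝕜 g z)
    (hu : AnalyticAt 𝕜 u z) (hG : AnalyticAt 𝕜 G (u z)) (m : ℕ) :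
    iteratedDeriv m (fun x => g x * G (u x)) z = ∑ j ∈ range (m + 1),
      iteratedDeriv j G (u z) / j.factorial *
        iteratedDeriv m (fun x => g x * (u x - u z) ^ j) z := by
  have hG_shift : AnalyticAt 𝕜 (fun x => G (u z + x)) 0 :=
    AnalyticAt.fun_comp (by simpa using hG) (by fun_prop)
  obtain ⟨F, hF, htaylor⟩ := hG_shift.exists_eq_sum_add_pow_mul (m + 1)
  have hu_sub : AnalyticAt 𝕜 (fun x => u x - u z) z := hu.sub analyticAt_const
  have hF_comp : AnalyticAt 𝕜 (fun x => F (u x - u z)) z :=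
    AnalyticAt.fun_comp (by simpa using hF) hu_sub
  have hterm (j : ℕ) : AnalyticAt 𝕜 (fun x => g x * (u x - u z) ^ j) z := hg.mul (hu_sub.pow j)
  have hexpand : (fun x => g x * G (u x)) = fun x =>
      (∑ j ∈ range (m + 1), iteratedDeriv j G (u z) / j.factorial * (g x * (u x - u z) ^ j)) +
        (u x - u z) ^ (m + 1) * (g x * F (u x - u z)) := by
    funext x
    have hderiv (j : ℕ) : iteratedDeriv j (fun x => G (u z + x)) 0 = iteratedDeriv j G (u z) := by
      simp [iteratedDeriv_comp_const_add]
    have hx := htaylor (u x - u z)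
    simp only [add_sub_cancel, smul_eq_mul, hderiv] at hx
    rw [hx, mul_add, mul_sum]
    congr 1
    · exact sum_congr rfl fun j _ => by ring
    · ring
  rw [hexpand, iteratedDeriv_fun_add, iteratedDeriv_fun_sum,
    iteratedDeriv_pow_mul_eq_zero hu_sub (hg.fun_mul hF_comp) (sub_self _) m.lt_add_one, add_zero]
  · exact sum_congr rfl fun j _ => iteratedDeriv_const_mul_field _ _
  · exact fun j _ => (analyticAt_const.mul (hterm j)).contDiffAt
  · exact (Finset.analyticAt_fun_sum _ fun j _ => analyticAt_const.mul (hterm j)).contDiffAt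
  · exact ((hu_sub.pow (m + 1)).mul (hg.mul hF_comp)).contDiffAt

lemma conj_iteratedDeriv_ofReal {f : ℂ → ℂ} (hf : ∀ z, f (conj z) = conj (f z)) (n : ℕ) (x : ℝ) :
    conj (iteratedDeriv n f x) = iteratedDeriv n f x := by
  have hcomm : conj ∘ iteratedDeriv n f ∘ conj = iteratedDeriv n f := by
    induction n with
    | zero => funext z; simp [hf]
    | succ n ih =>
      rw [iteratedDeriv_succ]
      nth_rewrite 2 [← ih]
      rw [deriv_conj_conj]
  simpa using congrFun hcomm x

lemma one_sub_ne_zero_of_norm_lt_one {w : ℂ} (hw : ‖w‖ < 1) : 1 - w ≠ 0 := by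
  intro h
  simp [← sub_eq_zero.mp h] at hw

/-- The coefficient of `w ^ i` in the expansion of `(1 - w) ^ n` at `0`, for an integer `n`. -/
def oneSubZPowCoeff (n : ℤ) (i : ℕ) : ℤ := (-1) ^ i * Ring.choose n i

lemma oneSubZPowCoeff_natCast (n i : ℕ) : oneSubZPowCoeff n i = (-1) ^ i * n.choose i := by
  rw [oneSubZPowCoeff, Ring.choose_natCast]

lemma oneSubZPowCoeff_neg_succ (n i : ℕ) :
    oneSubZPowCoeff (-(n + 1 : ℕ)) i = (n + i).choose n := by
  have hnat : ((n + 1 : ℕ) : ℤ) + i - 1 = (n + i : ℕ) := by push_cast; ring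
  rw [oneSubZPowCoeff, Ring.choose_neg, hnat, Ring.choose_natCast, Nat.choose_symm_add]
  simp [Int.negOnePow_def, Units.smul_def, ← mul_assoc, ← mul_pow]

lemma hasSum_oneSubZPowCoeff (n : ℤ) {w : ℂ} (hw : ‖w‖ < 1) :
    HasSum (fun i => (oneSubZPowCoeff n i : ℂ) * w ^ i) ((1 - w) ^ n) := by
  have h := (one_add_cpow_hasFPowerSeriesOnBall_zero (a := n)).hasSum (y := -w) (by
    simpa [← ofReal_norm, ENNReal.ofReal_lt_one] using hw)
  rw [zero_add, cpow_intCast, ← sub_eq_add_neg] at h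
  refine h.congr_fun fun i => ?_
  have hchoose : ((Ring.choose n i : ℤ) : ℂ) = Ring.choose (n : ℂ) i :=
    Ring.map_choose (Int.castRingHom ℂ) n i
  rw [binomialSeries_apply, ← hchoose]
  simp only [oneSubZPowCoeff, Int.reduceNeg, Int.cast_mul, Int.cast_pow, Int.cast_neg, Int.cast_one,
    List.ofFn_const, List.prod_replicate, neg_pow w, smul_eq_mul]
  ring

lemma hasSum_ite_le_mul_pow {a : ℕ → ℂ} {w S : ℂ} (h : HasSum (fun m => a m * w ^ m) S) (j : ℕ) :
    HasSum (fun m => (if j ≤ m then a (m - j) else 0) * w ^ m) (w ^ j * S) := by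
  have hinit : ∑ i ∈ range j, (if j ≤ i then a (i - j) else 0) * w ^ i = 0 :=
    sum_eq_zero fun i hi => by simp [(mem_range.mp hi).not_ge]
  rw [← hasSum_nat_add_iff' j, hinit, sub_zero]
  refine (h.mul_left (w ^ j)).congr_fun fun m => ?_
  simp only [le_add_iff_nonneg_left, zero_le, ↓reduceIte, add_tsub_cancel_right, pow_add]
  ring

lemma one_sub_pow_mul_inv_sub_one_pow {w : ℂ} (hw : 1 - w ≠ 0) (k j : ℕ) :
    (1 - w) ^ k * ((1 - w)⁻¹ - 1) ^ j = w ^ j * (1 - w) ^ ((k : ℤ) - j) := by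
  have hinv : (1 - w)⁻¹ - 1 = w * (1 - w)⁻¹ := by
    field_simp
    ring
  rw [hinv, mul_pow, zpow_sub₀ hw, zpow_natCast, zpow_natCast, inv_pow]
  ring

lemma iteratedDeriv_one_sub_pow_mul_inv_sub_one_pow (k : ℕ) {j m : ℕ} (hjm : j ≤ m) :
    iteratedDeriv m (fun w : ℂ => (1 - w) ^ k * ((1 - w)⁻¹ - 1) ^ j) 0 =
      m.factorial * oneSubZPowCoeff (k - j) (m - j) := by
  have hsum : ∀ᶠ w : ℂ in 𝓝 0, HasSum
      (fun m => (if j ≤ m then (oneSubZPowCoeff (k - j) (m - j) : ℂ) else 0) * w ^ m)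
      ((1 - w) ^ k * ((1 - w)⁻¹ - 1) ^ j) := by
    filter_upwards [Metric.ball_mem_nhds (0 : ℂ) one_pos] with w hw
    rw [mem_ball_zero_iff] at hw
    rw [one_sub_pow_mul_inv_sub_one_pow (one_sub_ne_zero_of_norm_lt_one hw)]
    exact hasSum_ite_le_mul_pow (hasSum_oneSubZPowCoeff _ hw) j
  rw [iteratedDeriv_zero_of_hasSum hsum, if_pos hjm]

end TaylorCoefficients

section HardySpace

lemma norm_sq_mul_one_sub_norm_sq_le_tsum {a : ℕ → ℂ} {w S : ℂ} (hw : ‖w‖ < 1)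
    (hS : HasSum (fun m => a m * w ^ m) S) (ha : Summable fun m => ‖a m‖ ^ 2) :
    ‖S‖ ^ 2 * (1 - ‖w‖ ^ 2) ≤ ∑' m, ‖a m‖ ^ 2 := by
  have hw_sq : ‖w‖ ^ 2 < 1 := pow_lt_one₀ (norm_nonneg w) hw two_ne_zero
  have hgeom := hasSum_geometric_of_lt_one (sq_nonneg ‖w‖) hw_sq
  rw [← le_div_iff₀ (sub_pos.mpr hw_sq), div_eq_mul_inv]
  refine le_of_tendsto (hS.tendsto_sum_nat.norm.pow 2) (.of_forall fun N => ?_)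
  calc ‖∑ m ∈ range N, a m * w ^ m‖ ^ 2 ≤ (∑ m ∈ range N, ‖a m‖ * ‖w‖ ^ m) ^ 2 := by
        gcongr
        exact norm_sum_le_of_le _ fun m _ => by rw [norm_mul, norm_pow]
    _ ≤ (∑ m ∈ range N, ‖a m‖ ^ 2) * ∑ m ∈ range N, (‖w‖ ^ m) ^ 2 := sum_mul_sq_le_sq_mul_sq _ _ _
    _ = (∑ m ∈ range N, ‖a m‖ ^ 2) * ∑ m ∈ range N, (‖w‖ ^ 2) ^ m := by simp only [pow_right_comm]
    _ ≤ (∑' m, ‖a m‖ ^ 2) * (1 - ‖w‖ ^ 2)⁻¹ := by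
        gcongr
        · exact ha.sum_le_tsum _ fun m _ => by positivity
        · exact sum_le_hasSum _ (fun m _ => by positivity) hgeom

lemma sum_norm_sq_eq_circleAverage (a : ℕ → ℂ) (N : ℕ) :
    ∑ m ∈ range N, ‖a m‖ ^ 2 =
      Real.circleAverage (fun z => ‖∑ m ∈ range N, a m * z ^ m‖ ^ 2) 0 1 := by
  set p : Polynomial ℂ := ∑ m ∈ range N, Polynomial.monomial m (a m) with hp
  have hcoeff (m : ℕ) : p.coeff m = if m < N then a m else 0 := by
    simp [hp, Polynomial.coeff_monomial]
  have hsupport : p.support ⊆ range N := fun m hm => by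
    by_contra hmN
    simp_all
  have heval (z : ℂ) : p.eval z = ∑ m ∈ range N, a m * z ^ m := by
    simp [hp, Polynomial.eval_finsetSum]
  simp only [← heval, ← p.sum_sq_norm_coeff_eq_circleAverage]
  rw [sum_subset hsupport fun m _ hm => by simp [Polynomial.notMem_support_iff.mp hm]]
  exact sum_congr rfl fun m hm => by rw [hcoeff, if_pos (mem_range.mp hm)]

lemma hasSum_norm_sq_circleAverage {a : ℕ → ℂ} (ha : Summable fun m => ‖a m‖) :
    HasSum (fun m => ‖a m‖ ^ 2)
      (Real.circleAverage (fun z => ‖∑' m, a m * z ^ m‖ ^ 2) 0 1) := by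
  rw [hasSum_iff_tendsto_nat_of_nonneg fun m => sq_nonneg ‖a m‖]
  simp only [sum_norm_sq_eq_circleAverage, Real.circleAverage_def]
  have hterm (θ : ℝ) (m : ℕ) : ‖a m * circleMap 0 1 θ ^ m‖ = ‖a m‖ := by simp
  refine (intervalIntegral.tendsto_integral_filter_of_dominated_convergence
    (fun _ => (∑' m, ‖a m‖) ^ 2) (.of_forall fun N => ?_)
    (.of_forall fun N => .of_forall fun θ _ => ?_) (by simp)
    (.of_forall fun θ _ => ?_)).const_smul _
  · exact Continuous.aestronglyMeasurable (by fun_prop)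
  · rw [norm_pow, norm_norm]
    gcongr
    exact (norm_sum_le _ _).trans_eq (sum_congr rfl fun m _ => hterm θ m) |>.trans
      (ha.sum_le_tsum _ fun m _ => norm_nonneg _)
  · have hsummable : Summable fun m => a m * circleMap 0 1 θ ^ m :=
      .of_norm (by simpa only [hterm] using ha)
    exact (hsummable.hasSum.tendsto_sum_nat.norm.pow 2)

lemma circleAverage_eq_integral_neg_pi_pi (g : ℂ → ℝ) (c : ℂ) (R : ℝ) :
    Real.circleAverage g c R = (2 * π)⁻¹ * ∫ θ in -π..π, g (circleMap c R θ) := by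
  rw [Real.circleAverage_eq_integral_add (-π),
    intervalIntegral.integral_comp_add_right (fun θ => g (circleMap c R θ)), smul_eq_mul]
  congr 3 <;> ring

lemma summable_norm_sq_of_circle_bound {a : ℕ → ℂ} {f : ℂ → ℂ}
    (hf : ∀ w : ℂ, ‖w‖ < 1 → HasSum (fun m => a m * w ^ m) (f w)) {b : ℝ → ℝ}
    (hb : IntervalIntegrable b volume (-π) π)
    (hfb : ∀ r ∈ Set.Ioo (0 : ℝ) 1, ∀ᵐ θ, θ ∈ Set.Ioc (-π) π → ‖f (circleMap 0 r θ)‖ ^ 2 ≤ b θ) :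
    Summable fun m => ‖a m‖ ^ 2 := by
  refine summable_of_sum_range_le (c := (2 * π)⁻¹ * ∫ θ in -π..π, b θ)
    (fun m => by positivity) fun M => ?_
  have hlim : Tendsto (fun r : ℝ => ∑ m ∈ range M, ‖a m * (r : ℂ) ^ m‖ ^ 2) (𝓝[<] 1)
      (𝓝 (∑ m ∈ range M, ‖a m‖ ^ 2)) :=
    (Continuous.tendsto' (by fun_prop) _ _ (by simp)).mono_left nhdsWithin_le_nhds
  refine le_of_tendsto hlim ?_
  filter_upwards [Ioo_mem_nhdsLT (zero_lt_one (α := ℝ))] with r hr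
  have hr_norm : ‖(r : ℂ)‖ = r := by simp [abs_of_pos hr.1]
  have hsummable : Summable fun m => ‖a m * (r : ℂ) ^ m‖ :=
    (hf r (hr_norm.trans_lt hr.2)).summable.norm
  have hparseval := hasSum_norm_sq_circleAverage hsummable
  have heval (θ : ℝ) : ∑' m, a m * (r : ℂ) ^ m * circleMap 0 1 θ ^ m = f (circleMap 0 r θ) := by
    rw [← (hf (circleMap 0 r θ) (by simpa [abs_of_pos hr.1] using hr.2)).tsum_eq]
    simp [circleMap, mul_pow, mul_assoc]
  rw [circleAverage_eq_integral_neg_pi_pi] at hparseval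
  simp only [heval] at hparseval
  refine (sum_le_hasSum _ (fun m _ => by positivity) hparseval).trans ?_
  have hpi : -π ≤ π := by linarith [Real.pi_pos]
  gcongr
  rw [intervalIntegral.integral_of_le hpi, intervalIntegral.integral_of_le hpi]
  refine integral_mono_of_nonneg (.of_forall fun θ => by positivity)
    ((intervalIntegrable_iff_integrableOn_Ioc_of_le hpi).mp hb) ?_
  exact (ae_restrict_iff' measurableSet_Ioc).mpr (hfb r hr)

lemma norm_one_sub_le_two_mul {u : ℂ} (hu : ‖u‖ = 1) {r : ℝ} (hr : r ≤ 1) (hr' : 0 ≤ r) :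
    ‖1 - u‖ ≤ 2 * ‖1 - r * u‖ := by
  have hru : ‖(r : ℂ) * u‖ = r := by simp [hu, abs_of_nonneg hr']
  have hsub : ‖(r : ℂ) * u - u‖ = 1 - r := by
    rw [← sub_one_mul, norm_mul, hu, ← ofReal_one, ← ofReal_sub, norm_real, Real.norm_eq_abs,
      abs_of_nonpos (sub_nonpos.mpr hr)]
    ring
  have hdist : 1 - r ≤ ‖1 - r * u‖ := by
    simpa only [norm_one, hru] using norm_sub_norm_le 1 (r * u)
  calc ‖1 - u‖ ≤ ‖1 - r * u‖ + ‖r * u - u‖ := norm_sub_le_norm_sub_add_norm_sub _ _ _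
    _ ≤ 2 * ‖1 - r * u‖ := by linarith

lemma abs_div_pi_le_norm_one_sub_circleMap {r θ : ℝ} (hr : r ∈ Set.Icc (0 : ℝ) 1) (hθ : |θ| ≤ π) :
    |θ| / π ≤ ‖1 - circleMap 0 r θ‖ := by
  have hchord : ‖1 - exp (θ * I)‖ = 2 * |Real.sin (θ / 2)| := by
    rw [norm_sub_rev, mul_comm, norm_exp_I_mul_ofReal_sub_one]
    simp
  have hjordan : 2 / π * |θ / 2| ≤ |Real.sin (θ / 2)| :=
    Real.mul_abs_le_abs_sin (by rw [abs_div, abs_two]; linarith)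
  have hradial := norm_one_sub_le_two_mul (norm_exp_ofReal_mul_I θ) hr.2 hr.1
  rw [circleMap_zero]
  calc |θ| / π = 2 / π * |θ / 2| := by rw [abs_div, abs_two]; ring
    _ ≤ ‖1 - r * exp (θ * I)‖ := by linarith

lemma intervalIntegrable_abs_rpow {p : ℝ} (hp : -1 < p) (a b : ℝ) :
    IntervalIntegrable (fun x : ℝ => |x| ^ p) volume a b := by
  refine intervalIntegrable_of_even (fun x => by rw [abs_neg]) fun x hx => ?_
  refine (intervalIntegral.intervalIntegrable_rpow' hp).congr fun y hy => ?_
  rw [Set.uIoc_of_le hx.le] at hy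
  simp only [abs_of_pos hy.1]

lemma summable_norm_sq_of_norm_le_rpow {a : ℕ → ℂ} {f : ℂ → ℂ}
    (hf : ∀ w : ℂ, ‖w‖ < 1 → HasSum (fun m => a m * w ^ m) (f w)) {b C : ℝ} (hb₀ : 0 ≤ b)
    (hb : b < 1 / 2) (hfb : ∀ w : ℂ, ‖w‖ < 1 → ‖f w‖ ≤ C * ‖1 - w‖ ^ (-b)) :
    Summable fun m => ‖a m‖ ^ 2 := by
  have hC : 0 ≤ C := by simpa using (norm_nonneg _).trans (hfb 0 (by simp))
  refine summable_norm_sq_of_circle_bound hf (b := fun θ => (C * π ^ b) ^ 2 * |θ| ^ (-b * 2))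
    ((intervalIntegrable_abs_rpow (by linarith) (-π) π).const_mul _) fun r hr => ?_
  filter_upwards [Measure.ae_ne volume 0] with θ hθ₀ hθ
  have hdist := abs_div_pi_le_norm_one_sub_circleMap ⟨hr.1.le, hr.2.le⟩ (abs_le.mpr ⟨hθ.1.le, hθ.2⟩)
  have hbound : ‖f (circleMap 0 r θ)‖ ≤ C * π ^ b * |θ| ^ (-b) :=
    calc ‖f (circleMap 0 r θ)‖ ≤ C * ‖1 - circleMap 0 r θ‖ ^ (-b) :=
          hfb _ (by simpa [abs_of_pos hr.1] using hr.2)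
      _ ≤ C * (|θ| / π) ^ (-b) := mul_le_mul_of_nonneg_left
          (Real.rpow_le_rpow_of_nonpos (by positivity) hdist (neg_nonpos.mpr hb₀)) hC
      _ = C * π ^ b * |θ| ^ (-b) := by
          rw [Real.div_rpow (abs_nonneg θ) Real.pi_nonneg, Real.rpow_neg Real.pi_nonneg]
          field_simp
  calc ‖f (circleMap 0 r θ)‖ ^ 2 ≤ (C * π ^ b * |θ| ^ (-b)) ^ 2 := by gcongr
    _ = (C * π ^ b) ^ 2 * |θ| ^ (-b * 2) := by
      rw [mul_pow, ← Real.rpow_mul_natCast (abs_nonneg θ), Nat.cast_two]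

end HardySpace

section Mellin

variable {E : Type*} [NormedAddCommGroup E] [NormedSpace ℂ E] {f : ℝ → E} {C : ℝ} {s : ℂ}

lemma mellin_eq_setIntegral_Ioi_one (hf₁ : ∀ x ≤ 1, f x = 0) :
    mellin f s = ∫ x in Set.Ioi (1 : ℝ), (x : ℂ) ^ (s - 1) • f x := by
  refine setIntegral_eq_of_subset_of_forall_sdiff_eq_zero measurableSet_Ioi
    (Set.Ioi_subset_Ioi zero_le_one) fun x hx => ?_
  rw [hf₁ x (not_lt.mp hx.2), smul_zero]

lemma differentiableAt_mellin_of_bounded (hf : AEStronglyMeasurable f) (hfC : ∀ x, ‖f x‖ ≤ C)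
    (hf₁ : ∀ x ≤ 1, f x = 0) (hs : s.re < 0) : DifferentiableAt ℂ (mellin f) s := by
  refine mellin_differentiableAt_of_isBigO_rpow (a := 0) (b := s.re - 1) ?_ ?_ hs ?_ (by linarith)
  · exact ((locallyIntegrable_const C).mono hf
      (ae_of_all _ fun x => (hfC x).trans (le_abs_self C))).locallyIntegrableOn _
  · exact .of_bound C (.of_forall fun x => by simpa using hfC x)
  · refine .of_bound 1 ?_
    filter_upwards [nhdsWithin_le_nhds (Iio_mem_nhds one_pos)] with x hx
    rw [hf₁ x hx.le, norm_zero]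
    positivity

lemma norm_mellin_le_of_bounded (hfC : ∀ x, ‖f x‖ ≤ C) (hf₁ : ∀ x ≤ 1, f x = 0) (hs : s.re < 0) :
    ‖mellin f s‖ ≤ C / -s.re := by
  have hexp : s.re - 1 < -1 := by linarith
  have hintegral : ∫ x in Set.Ioi (1 : ℝ), C * x ^ (s.re - 1) = C / -s.re := by
    rw [integral_const_mul, integral_Ioi_rpow_of_lt hexp one_pos, sub_add_cancel, Real.one_rpow,
      neg_div, ← div_neg, mul_one_div]
  rw [mellin_eq_setIntegral_Ioi_one hf₁, ← hintegral]
  refine norm_integral_le_of_norm_le ((integrableOn_Ioi_rpow_of_lt hexp one_pos).const_mul C) ?_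
  filter_upwards [ae_restrict_mem measurableSet_Ioi] with x hx
  have hx₀ : 0 < x := zero_lt_one.trans (Set.mem_Ioi.mp hx)
  rw [norm_smul, norm_cpow_eq_rpow_re_of_pos hx₀, sub_re, one_re, mul_comm]
  gcongr
  exact hfC x

end Mellin

section HalfPlane

variable {g : ℂ → ℂ} {a A B C M c : ℝ} {s : ℂ}

lemma norm_le_of_half_plane (hB : 0 ≤ B) (hd : ∀ s : ℂ, c ≤ s.re → DifferentiableAt ℂ g s)
    (hexp : ∀ s : ℂ, c ≤ s.re → ‖g s‖ ≤ A * Real.exp (B * ‖s‖))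
    (hreal : ∀ x : ℝ, c ≤ x → ‖g x‖ ≤ M) (hline : ∀ s : ℂ, s.re = c → ‖g s‖ ≤ C)
    (hs : c ≤ s.re) : ‖g s‖ ≤ C := by
  have hre {z : ℂ} (hz : 0 ≤ z.re) : c ≤ (z + c).re := by simpa using hz
  have hdiff : DiffContOnCl ℂ (fun z => g (z + c)) {z | 0 < z.re} := by
    refine DifferentiableOn.diffContOnCl fun z hz => DifferentiableAt.differentiableWithinAt ?_
    rw [closure_setOfPred_lt_re] at hz
    exact (hd _ (hre hz)).fun_comp' z (by fun_prop)
  have hgrowth : ∃ b < (2 : ℝ), ∃ B', (fun z => g (z + c))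
      =O[Bornology.cobounded ℂ ⊓ 𝓟 {z | 0 < z.re}] fun z => Real.exp (B' * ‖z‖ ^ b) := by
    refine ⟨1, one_lt_two, B, .of_bound (|A| * Real.exp (B * |c|)) ?_⟩
    filter_upwards [mem_inf_of_right (mem_principal_self _)] with z hz
    rw [Real.rpow_one, Real.norm_of_nonneg (Real.exp_nonneg _)]
    calc ‖g (z + c)‖ ≤ |A| * Real.exp (B * (‖z‖ + |c|)) := by
          refine (hexp _ (hre (le_of_lt hz))).trans ?_
          gcongr
          · exact le_abs_self A
          · exact norm_add_le_of_le le_rfl (norm_real c).le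
      _ = |A| * Real.exp (B * |c|) * Real.exp (B * ‖z‖) := by
        rw [mul_add, Real.exp_add]
        ring
  have hreal_bdd : IsBoundedUnder (· ≤ ·) atTop fun x : ℝ => ‖g (x + c)‖ := by
    refine isBoundedUnder_of_eventually_le (a := M) ?_
    filter_upwards [eventually_ge_atTop 0] with x hx
    exact_mod_cast hreal (x + c) (le_add_of_nonneg_left hx)
  simpa using PhragmenLindelof.right_half_plane_of_bounded_on_real (z := s - c) hdiff hgrowth
    hreal_bdd (fun y => hline _ (by simp)) (by simpa using hs)

lemma norm_le_mul_norm_rpow_of_half_plane (ha : 0 ≤ a) (hc : 0 < c) (hB : 0 ≤ B)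
    (hd : ∀ s : ℂ, c ≤ s.re → DifferentiableAt ℂ g s)
    (hexp : ∀ s : ℂ, c ≤ s.re → ‖g s‖ ≤ A * Real.exp (B * ‖s‖))
    (hreal : ∀ x : ℝ, c ≤ x → ‖g x‖ ≤ M)
    (hline : ∀ s : ℂ, s.re = c → ‖g s‖ ≤ C * ‖s‖ ^ a) (hs : c ≤ s.re) :
    ‖g s‖ ≤ C * ‖s‖ ^ a := by
  have hpos {z : ℂ} (hz : c ≤ z.re) : 0 < ‖z‖ ^ a :=
    Real.rpow_pos_of_pos (hc.trans_le (hz.trans (re_le_norm z))) a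
  have hnorm (z : ℂ) : ‖g z / z ^ (a : ℂ)‖ = ‖g z‖ / ‖z‖ ^ a := by rw [norm_div, norm_cpow_real]
  have hle_div {z : ℂ} (hz : c ≤ z.re) : ‖g z / z ^ (a : ℂ)‖ ≤ ‖g z‖ / c ^ a := by
    rw [hnorm]
    gcongr
    exact hz.trans (re_le_norm z)
  have hquot : ‖g s / s ^ (a : ℂ)‖ ≤ C := by
    refine norm_le_of_half_plane (g := fun z => g z / z ^ (a : ℂ)) (A := A / c ^ a) (M := M / c ^ a)
      hB (fun z hz => ?_) (fun z hz => ?_) (fun x hx => ?_) (fun z hz => ?_) hs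
    · have hslit : z ∈ slitPlane := .inl (hc.trans_le hz)
      refine (hd z hz).fun_div (by fun_prop (disch := exact hslit)) ?_
      exact cpow_ne_zero_iff.mpr (.inl (slitPlane_ne_zero hslit))
    · rw [div_mul_eq_mul_div]
      exact (hle_div hz).trans (by gcongr; exact hexp z hz)
    · exact (hle_div (by simpa using hx)).trans (by gcongr; exact hreal x hx)
    · rw [hnorm, div_le_iff₀ (hpos hz.ge)]
      exact hline z hz
  rwa [hnorm, div_le_iff₀ (hpos hs)] at hquot

end HalfPlane

section ZetaDisc

lemma zetaPowAux_eq_pow (k : ℕ) : zetaPowAux k = fun s => riemannZeta₁ s ^ k := by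
  funext s
  rcases eq_or_ne s 1 with rfl | hs
  · simp [zetaPowAux]
  · rw [zetaPowAux, Function.update_of_ne hs, riemannZeta_eq_inv_sub_mul hs,
      mul_inv_cancel_left₀ (sub_ne_zero.mpr hs)]

lemma zetaPowAux_conj (k : ℕ) (s : ℂ) : zetaPowAux k (conj s) = conj (zetaPowAux k s) := by
  rcases eq_or_ne s 1 with rfl | hs
  · simp [zetaPowAux]
  · have hs' : conj s ≠ 1 := (starRingEnd ℂ).injective.ne_iff' (map_one _) |>.mpr hs
    simp [zetaPowAux, Function.update_of_ne, hs, hs', riemannZeta_conj]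

lemma iteratedDeriv_zetaPowAux_one (k j : ℕ) : iteratedDeriv j (zetaPowAux k) 1 = lam k j := by
  have h := conj_iteratedDeriv_ofReal (zetaPowAux_conj k) j 1
  rw [ofReal_one] at h
  exact (conj_eq_iff_re.mp h).symm

/-- The function `ζ₁(s) / s`, where `ζ₁(s) = (s - 1) ζ(s)`, in the coordinate `w = 1 - 1 / s`,
which maps the half-plane `1 / 2 < re s` onto the unit disc. -/
noncomputable def zetaDisc (w : ℂ) : ℂ := (1 - w) * riemannZeta₁ (1 - w)⁻¹

lemma zetaDisc_one_sub_inv (s : ℂ) : zetaDisc (1 - s⁻¹) = riemannZeta₁ s / s := by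
  rw [zetaDisc, sub_sub_cancel, inv_inv, div_eq_inv_mul]

lemma differentiableAt_zetaDisc {w : ℂ} (hw : ‖w‖ < 1) : DifferentiableAt ℂ zetaDisc w := by
  have hsub : DifferentiableAt ℂ (fun w : ℂ => 1 - w) w := by fun_prop
  exact hsub.mul ((differentiable_riemannZeta₁ _).comp w
    (hsub.inv (one_sub_ne_zero_of_norm_lt_one hw)))

lemma iteratedDeriv_zetaDisc_pow (k m : ℕ) :
    iteratedDeriv m (fun w => zetaDisc w ^ k) 0 = m.factorial *
      ∑ j ∈ range (m + 1), lam k j / j.factorial * oneSubZPowCoeff (k - j) (m - j) := by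
  have hpow : (fun w => zetaDisc w ^ k) = fun w => (1 - w) ^ k * zetaPowAux k (1 - w)⁻¹ := by
    funext w
    rw [zetaPowAux_eq_pow, zetaDisc, mul_pow]
  have hzeta : AnalyticAt ℂ (zetaPowAux k) (1 - 0)⁻¹ := by
    rw [zetaPowAux_eq_pow]
    exact (differentiable_riemannZeta₁.analyticAt _).pow k
  rw [hpow, iteratedDeriv_mul_comp (g := fun w => (1 - w) ^ k) (u := fun w => (1 - w)⁻¹)
    (by fun_prop) (AnalyticAt.fun_inv (by fun_prop) (by simp)) hzeta, ofReal_sum, mul_sum]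
  refine sum_congr rfl fun j hj => ?_
  rw [sub_zero, inv_one, iteratedDeriv_zetaPowAux_one,
    iteratedDeriv_one_sub_pow_mul_inv_sub_one_pow k (mem_range_succ_iff.mp hj)]
  push_cast
  ring

lemma neg_one_pow_mul_ell_of_lt {k m : ℕ} (hkm : k < m) : (-1) ^ (m + k) * ell k (m - k) =
    ∑ j ∈ range (m + 1), lam k j / j.factorial * oneSubZPowCoeff (k - j) (m - j) := by
  obtain ⟨n, rfl⟩ := Nat.exists_eq_add_of_le (Nat.succ_le_of_lt hkm)
  have hinit : ∑ j ∈ range (k + 1),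
      lam k j / j.factorial * oneSubZPowCoeff (k - j) (k + 1 + n - j) = 0 := by
    refine sum_eq_zero fun j hj => ?_
    rw [← Nat.cast_sub (mem_range_succ_iff.mp hj), oneSubZPowCoeff_natCast,
      Nat.choose_eq_zero_of_lt (by grind)]
    simp
  have htail (j : ℕ) (hj : j ∈ range (n + 1)) :
      oneSubZPowCoeff (k - (k + 1 + j : ℕ)) (k + 1 + n - (k + 1 + j)) = n.choose j := by
    rw [show (k : ℤ) - (k + 1 + j : ℕ) = -(j + 1 : ℕ) by push_cast; ring,
      oneSubZPowCoeff_neg_succ, show j + (k + 1 + n - (k + 1 + j)) = n by grind]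
  have hn : (((k + 1 + n : ℕ) : ℤ) - k).toNat = n + 1 := by omega
  rw [ell, if_pos (by omega), hn, add_assoc (k + 1) n 1, sum_range_add, hinit, zero_add,
    ← Ico_add_one_right_eq_Icc, sum_Ico_eq_sum_range, ← mul_assoc, ← pow_add,
    Even.neg_one_pow (by grind), one_mul]
  refine sum_congr rfl fun j hj => ?_
  rw [htail j hj, show 1 + j + k = k + 1 + j by ring, Nat.add_sub_cancel_left]
  push_cast
  ring

lemma neg_one_pow_mul_ell_of_le {k m : ℕ} (hmk : m ≤ k) : (-1) ^ (m + k) * ell k (m - k) =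
    ∑ j ∈ range (m + 1), lam k j / j.factorial * oneSubZPowCoeff (k - j) (m - j) := by
  have hneg : (-((m : ℤ) - k)).toNat = k - m := by omega
  have hadd : ((k : ℤ) + ((m : ℤ) - k)).toNat = m := by omega
  have hcoeff (j : ℕ) (hj : j ≤ m) : oneSubZPowCoeff (k - j) (m - j) =
      (-1) ^ (m - j) * (k - j).choose (k - m) := by
    rw [← Nat.cast_sub (hj.trans hmk), oneSubZPowCoeff_natCast,
      Nat.choose_symm_of_eq_add (show k - j = (m - j) + (k - m) by omega)]
  rw [ell, if_neg (by omega), hneg, hadd, ← mul_assoc, ← pow_add, mul_sum]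
  refine sum_congr rfl fun j hj => ?_
  have hj : j ≤ m := mem_range_succ_iff.mp hj
  have hsign : (-1 : ℝ) ^ (m + k + k) * (-1) ^ j = (-1) ^ (m - j) := by
    rw [← pow_add, show m + k + k + j = m - j + 2 * (k + j) by omega, pow_add, pow_mul]
    simp
  rw [hcoeff j hj]
  push_cast
  linear_combination ((k - j).choose (k - m) * lam k j / j.factorial : ℝ) * hsign

lemma hasSum_ell_mul_pow (k : ℕ) {w : ℂ} (hw : ‖w‖ < 1) :
    HasSum (fun m : ℕ => (((-1) ^ (m + k) * ell k (m - k) : ℝ) : ℂ) * w ^ m) (zetaDisc w ^ k) := by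
  have hdiff : DifferentiableOn ℂ (fun w => zetaDisc w ^ k) (Metric.ball 0 1) := fun z hz =>
    ((differentiableAt_zetaDisc (mem_ball_zero_iff.mp hz)).pow k).differentiableWithinAt
  refine (hasSum_taylorSeries_on_ball hdiff (mem_ball_zero_iff.mpr hw)).congr_fun fun m => ?_
  have hell : (-1) ^ (m + k) * ell k (m - k) =
      ∑ j ∈ range (m + 1), lam k j / j.factorial * oneSubZPowCoeff (k - j) (m - j) := by
    rcases lt_or_ge k m with hkm | hmk
    exacts [neg_one_pow_mul_ell_of_lt hkm, neg_one_pow_mul_ell_of_le hmk]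
  rw [iteratedDeriv_zetaDisc_pow, hell]
  have hfact : (m.factorial : ℂ) ≠ 0 := mod_cast m.factorial_ne_zero
  push_cast [sub_zero, smul_eq_mul]
  field_simp

end ZetaDisc

section ZetaMellin

/-- The fractional part on `(1, ∞)`, extended by `0`: its Mellin transform is what remains of the
Mellin transform of `⌊x⌋` once the pole of `ζ` is split off. -/
noncomputable def fractTail : ℝ → ℂ := (Set.Ioi 1).indicator fun x => (Int.fract x : ℝ)

lemma fractTail_of_le_one (x : ℝ) (hx : x ≤ 1) : fractTail x = 0 :=
  Set.indicator_of_notMem (Set.notMem_Ioi.mpr hx) _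

lemma fractTail_of_one_lt {x : ℝ} (hx : 1 < x) : fractTail x = (Int.fract x : ℝ) :=
  Set.indicator_of_mem hx _

lemma norm_fractTail_le_one (x : ℝ) : ‖fractTail x‖ ≤ 1 := by
  refine (norm_indicator_le_norm_self _ _).trans ?_
  rw [norm_real, Real.norm_of_nonneg (Int.fract_nonneg x)]
  exact (Int.fract_lt_one x).le

lemma aestronglyMeasurable_fractTail : AEStronglyMeasurable fractTail :=
  ((measurable_ofReal.comp measurable_fract).indicator measurableSet_Ioi).aestronglyMeasurable

lemma riemannZeta_eq_mul_integral_floor {s : ℂ} (hs : 1 < s.re) :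
    riemannZeta s = s * ∫ t in Set.Ioi (1 : ℝ), (⌊t⌋₊ : ℂ) * (t : ℂ) ^ (-(s + 1)) := by
  have h := LSeries_eq_mul_integral_of_nonneg (fun _ => (1 : ℝ)) zero_le_one hs
    (.of_bound 1 (.of_forall fun n => by simp)) fun _ => zero_le_one
  rw [← LSeries_one_eq_riemannZeta hs]
  simpa [Pi.one_def] using h

lemma natCast_floor_mul_cpow {t : ℝ} (ht : 1 < t) (s : ℂ) :
    (⌊t⌋₊ : ℂ) * (t : ℂ) ^ (-(s + 1)) =
      (t : ℂ) ^ (-s) - (t : ℂ) ^ (-s - 1) • fractTail t := by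
  have ht₀ : 0 < t := zero_lt_one.trans ht
  have hfloor : (⌊t⌋₊ : ℝ) = t - Int.fract t := by
    rw [natCast_floor_eq_intCast_floor ht₀.le, Int.self_sub_fract]
  have hpow : (t : ℂ) ^ (-s) = t * (t : ℂ) ^ (-s - 1) := by
    rw [cpow_sub _ _ (ofReal_ne_zero.mpr ht₀.ne'), cpow_one,
      mul_div_cancel₀ _ (ofReal_ne_zero.mpr ht₀.ne')]
  rw [fractTail_of_one_lt ht, hpow, ← ofReal_natCast, hfloor, ofReal_sub, smul_eq_mul, neg_add']
  ring

lemma integral_floor_mul_cpow {s : ℂ} (hs : 1 < s.re) :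
    ∫ t in Set.Ioi (1 : ℝ), (⌊t⌋₊ : ℂ) * (t : ℂ) ^ (-(s + 1)) =
      1 / (s - 1) - mellin fractTail (-s) := by
  have hre : (-s).re < -1 := by simpa using hs
  have hint_pow : IntegrableOn (fun t : ℝ => (t : ℂ) ^ (-s)) (Set.Ioi 1) :=
    integrableOn_Ioi_cpow_of_lt hre one_pos
  have hint_fract : IntegrableOn (fun t : ℝ => (t : ℂ) ^ (-s - 1) • fractTail t) (Set.Ioi 1) :=
    (integrableOn_Ioi_cpow_of_lt (by rw [sub_re, one_re]; linarith) one_pos).mul_bdd (c := 1)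
      aestronglyMeasurable_fractTail.restrict (ae_of_all _ norm_fractTail_le_one)
  rw [setIntegral_congr_fun measurableSet_Ioi fun t ht => natCast_floor_mul_cpow ht s,
    integral_sub hint_pow hint_fract, ← mellin_eq_setIntegral_Ioi_one fractTail_of_le_one,
    integral_Ioi_cpow_of_lt hre one_pos, ofReal_one, one_cpow, neg_add_eq_sub, ← neg_sub s 1,
    neg_div_neg_eq]

lemma riemannZeta₁_eq_of_one_lt_re {s : ℂ} (hs : 1 < s.re) :
    riemannZeta₁ s = s - s * (s - 1) * mellin fractTail (-s) := by
  have hs₁ : s ≠ 1 := by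
    rintro rfl
    simp at hs
  have hsub : s - 1 ≠ 0 := sub_ne_zero.mpr hs₁
  have h := riemannZeta_eq_mul_integral_floor hs
  rw [integral_floor_mul_cpow hs, riemannZeta_eq_inv_sub_mul hs₁, inv_mul_eq_iff_eq_mul₀ hsub] at h
  rw [h]
  field_simp

lemma riemannZeta₁_eq_of_re_pos {s : ℂ} (hs : 0 < s.re) :
    riemannZeta₁ s = s - s * (s - 1) * mellin fractTail (-s) := by
  have hopen (c : ℝ) : IsOpen {s : ℂ | c < s.re} := isOpen_lt continuous_const continuous_re
  have hdiff : DifferentiableOn ℂ (fun s => s - s * (s - 1) * mellin fractTail (-s))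
      {s : ℂ | 0 < s.re} := fun z hz => by
    have hmellin : DifferentiableAt ℂ (mellin fractTail) (-z) :=
      differentiableAt_mellin_of_bounded aestronglyMeasurable_fractTail norm_fractTail_le_one
        fractTail_of_le_one (by simpa using hz)
    exact (differentiableAt_id.fun_sub ((by fun_prop : DifferentiableAt ℂ (fun z => z * (z - 1)) z)
      |>.fun_mul (hmellin.fun_comp' z differentiableAt_id.neg))).differentiableWithinAt
  have heq : riemannZeta₁ =ᶠ[𝓝 2] fun s => s - s * (s - 1) * mellin fractTail (-s) := by
    filter_upwards [(hopen 1).mem_nhds (by simp : (2 : ℂ) ∈ {s : ℂ | 1 < s.re})] with z hz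
    exact riemannZeta₁_eq_of_one_lt_re hz
  exact (differentiable_riemannZeta₁.differentiableOn.analyticOnNhd (hopen 0))
    |>.eqOn_of_preconnected_of_eventuallyEq (hdiff.analyticOnNhd (hopen 0))
      (convex_halfSpace_re_gt 0).isPreconnected (by simp) heq hs

lemma norm_riemannZeta₁_div_self_le {s : ℂ} (hs : 0 < s.re) :
    ‖riemannZeta₁ s / s‖ ≤ 1 + ‖s - 1‖ / s.re := by
  have hs₀ : s ≠ 0 := by
    rintro rfl
    simp at hs
  have hdiv : riemannZeta₁ s / s = 1 - (s - 1) * mellin fractTail (-s) := by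
    rw [riemannZeta₁_eq_of_re_pos hs]
    field_simp
  have hmellin : ‖mellin fractTail (-s)‖ ≤ 1 / s.re := by
    simpa using norm_mellin_le_of_bounded (s := -s) norm_fractTail_le_one fractTail_of_le_one
      (by simpa using hs)
  calc ‖riemannZeta₁ s / s‖ ≤ ‖(1 : ℂ)‖ + ‖(s - 1) * mellin fractTail (-s)‖ := by
        rw [hdiv]
        exact norm_sub_le _ _
    _ ≤ 1 + ‖s - 1‖ * (1 / s.re) := by
        rw [norm_one, norm_mul]
        gcongr
    _ = 1 + ‖s - 1‖ / s.re := by rw [mul_one_div]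

end ZetaMellin

section CriticalLine

/-- The bound `ζ(s) = O(|s| ^ a)` on the whole critical line. Using `|s|` instead of `|Im s|` avoids
excluding a neighbourhood of the real axis. -/
def HasCriticalLineExponent (a : ℝ) : Prop :=
  ∃ C, ∀ s : ℂ, s.re = 1 / 2 → ‖riemannZeta s‖ ≤ C * ‖s‖ ^ a

lemma half_le_norm_of_half_le_re {s : ℂ} (hs : 1 / 2 ≤ s.re) : 1 / 2 ≤ ‖s‖ :=
  hs.trans (re_le_norm s)

lemma norm_riemannZeta₁_div_self_of_re_eq_half {s : ℂ} (hs : s.re = 1 / 2) :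
    ‖riemannZeta₁ s / s‖ = ‖riemannZeta s‖ := by
  have hs₁ : s ≠ 1 := by
    rintro rfl
    norm_num at hs
  have hnorm : ‖s - 1‖ = ‖s‖ := by
    rw [norm_eq_sqrt_sq_add_sq, norm_eq_sqrt_sq_add_sq, sub_re, sub_im, one_re, one_im, hs]
    norm_num
  rw [riemannZeta_eq_inv_sub_mul hs₁, norm_mul, norm_inv, norm_div, hnorm, inv_mul_eq_div]

lemma HasCriticalLineExponent.mono {a b : ℝ} (h : HasCriticalLineExponent a) (hab : a ≤ b) :
    HasCriticalLineExponent b := by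
  obtain ⟨C, hC⟩ := h
  refine ⟨|C| * 2 ^ (b - a), fun s hs => (hC s hs).trans ?_⟩
  have hs₀ : 0 < ‖s‖ := by linarith [half_le_norm_of_half_le_re hs.ge]
  have hone : 1 ≤ (2 * ‖s‖) ^ (b - a) :=
    Real.one_le_rpow (by linarith [half_le_norm_of_half_le_re hs.ge]) (sub_nonneg.mpr hab)
  calc C * ‖s‖ ^ a ≤ |C| * ‖s‖ ^ a * (2 * ‖s‖) ^ (b - a) := by
        refine (mul_le_mul_of_nonneg_right (le_abs_self C) (by positivity)).trans ?_
        exact le_mul_of_one_le_right (by positivity) hone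
    _ = |C| * 2 ^ (b - a) * ‖s‖ ^ b := by
        rw [Real.mul_rpow zero_le_two hs₀.le, Real.rpow_sub hs₀]
        field_simp

lemma abs_le_norm_half_add_mul_I (t : ℝ) : |t| ≤ ‖(1 / 2 + t * I : ℂ)‖ := by
  simpa using abs_im_le_norm (1 / 2 + t * I : ℂ)

lemma norm_half_add_mul_I_le {t : ℝ} (ht : 1 ≤ |t|) : ‖(1 / 2 + t * I : ℂ)‖ ≤ 2 * |t| := by
  refine (norm_add_le _ _).trans ?_
  rw [norm_mul, norm_I, norm_real, Real.norm_eq_abs]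
  norm_num
  linarith

lemma exists_norm_riemannZeta_half_add_mul_I_le :
    ∃ M, ∀ t : ℝ, |t| ≤ 1 → ‖riemannZeta (1 / 2 + t * I)‖ ≤ M := by
  have hcont : Continuous fun t : ℝ => riemannZeta (1 / 2 + t * I) := by
    refine continuous_iff_continuousAt.mpr fun t => ?_
    have ht : (1 / 2 + t * I : ℂ) ≠ 1 := fun h => by simpa using congrArg re h
    exact (differentiableAt_riemannZeta ht).continuousAt.comp
      (f := fun t : ℝ => (1 / 2 + t * I : ℂ)) (by fun_prop)
  obtain ⟨M, hM⟩ := isCompact_Icc.exists_bound_of_continuousOn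
    (hcont.continuousOn (s := Set.Icc (-1) 1))
  exact ⟨M, fun t ht => hM t (abs_le.mp ht)⟩

lemma LindelofHypothesis.hasCriticalLineExponent (h : LindelofHypothesis) {ε : ℝ} (hε : 0 < ε) :
    HasCriticalLineExponent ε := by
  obtain ⟨C, hC⟩ := h ε hε
  obtain ⟨M, hM⟩ := exists_norm_riemannZeta_half_add_mul_I_le
  have hM₀ : 0 ≤ M := (norm_nonneg _).trans (hM 0 (by simp))
  refine ⟨|C| + M * 2 ^ ε, fun s hs => ?_⟩
  obtain ⟨t, rfl⟩ : ∃ t : ℝ, s = 1 / 2 + t * I := ⟨s.im, by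
    rw [← re_add_im s, hs]
    simp⟩
  set r := ‖(1 / 2 + t * I : ℂ)‖
  have hr : 1 ≤ 2 * r := by linarith [half_le_norm_of_half_le_re hs.ge]
  rcases le_total |t| 1 with ht | ht
  · calc ‖riemannZeta (1 / 2 + t * I)‖ ≤ M := hM t ht
      _ ≤ M * (2 * r) ^ ε := le_mul_of_one_le_right hM₀ (Real.one_le_rpow hr hε.le)
      _ = M * 2 ^ ε * r ^ ε := by rw [Real.mul_rpow zero_le_two (norm_nonneg _), mul_assoc]
      _ ≤ (|C| + M * 2 ^ ε) * r ^ ε := by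
        gcongr
        exact le_add_of_nonneg_left (abs_nonneg C)
  · calc ‖riemannZeta (1 / 2 + t * I)‖ ≤ |C| * |t| ^ ε :=
        (hC t ht).trans (by gcongr; exact le_abs_self C)
      _ ≤ (|C| + M * 2 ^ ε) * r ^ ε := by
        gcongr
        · exact le_add_of_nonneg_right (by positivity)
        · exact abs_le_norm_half_add_mul_I t

lemma lindelofHypothesis_of_forall_hasCriticalLineExponent
    (h : ∀ ε, 0 < ε → HasCriticalLineExponent ε) : LindelofHypothesis := by
  intro ε hε
  obtain ⟨C, hC⟩ := h ε hε
  refine ⟨|C| * 2 ^ ε, fun t ht => ?_⟩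
  calc ‖riemannZeta (1 / 2 + t * I)‖ ≤ |C| * (2 * |t|) ^ ε := by
        refine (hC _ (by simp)).trans ?_
        gcongr
        · exact le_abs_self C
        · exact norm_half_add_mul_I_le ht
    _ = |C| * 2 ^ ε * |t| ^ ε := by rw [Real.mul_rpow zero_le_two (abs_nonneg t), mul_assoc]

end CriticalLine

section SummableImpliesExponent

variable {k : ℕ} {s : ℂ}

lemma norm_sq_neg_one_pow_mul_ell (k m : ℕ) :
    ‖(((-1) ^ (m + k) * ell k (m - k) : ℝ) : ℂ)‖ ^ 2 = ell k (m - k) ^ 2 := by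
  rw [norm_real, norm_mul, norm_pow, norm_neg, norm_one, one_pow, one_mul, Real.norm_eq_abs, sq_abs]

lemma norm_one_sub_inv_sq (hs : s ≠ 0) : ‖1 - s⁻¹‖ ^ 2 = 1 - (2 * s.re - 1) / ‖s‖ ^ 2 := by
  have hdiv : 1 - s⁻¹ = (s - 1) / s := by field_simp
  have hsub : ‖s - 1‖ ^ 2 = ‖s‖ ^ 2 - (2 * s.re - 1) := by
    simp only [Complex.sq_norm, normSq_apply, sub_re, one_re, sub_im, one_im]
    ring
  rw [hdiv, norm_div, div_pow, hsub, sub_div, div_self (by simpa using hs)]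

lemma norm_one_sub_inv_lt_one (hs : 1 / 2 < s.re) : ‖1 - s⁻¹‖ < 1 := by
  have hs₀ : s ≠ 0 := norm_pos_iff.mp (by linarith [re_le_norm s])
  have hσ : 0 < 2 * s.re - 1 := by linarith
  rw [← sq_lt_one_iff₀ (norm_nonneg _), norm_one_sub_inv_sq hs₀, sub_lt_self_iff]
  positivity

lemma norm_riemannZeta₁_div_self_pow_mul_le
    (hk : Summable fun m : ℕ => ell k (m - k) ^ 2) (hs : 1 / 2 < s.re) :
    ‖riemannZeta₁ s / s‖ ^ (2 * k) * (2 * s.re - 1) ≤ (∑' m : ℕ, ell k (m - k) ^ 2) * ‖s‖ ^ 2 := by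
  have hs₀ : 0 < ‖s‖ := by linarith [re_le_norm s]
  simp only [← norm_sq_neg_one_pow_mul_ell k] at hk ⊢
  have hpoint := norm_sq_mul_one_sub_norm_sq_le_tsum (norm_one_sub_inv_lt_one hs)
    (hasSum_ell_mul_pow k (norm_one_sub_inv_lt_one hs)) hk
  rwa [zetaDisc_one_sub_inv, norm_pow, ← pow_mul, mul_comm k 2,
    norm_one_sub_inv_sq (norm_pos_iff.mp hs₀), sub_sub_cancel, ← mul_div_assoc,
    div_le_iff₀ (by positivity)] at hpoint

lemma norm_deriv_riemannZeta₁_div_self_le (hs : 1 / 2 ≤ s.re) :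
    ‖deriv (fun z => riemannZeta₁ z / z) s‖ ≤ 64 * ‖s‖ := by
  have hhalf := half_le_norm_of_half_le_re hs
  have hre {y : ℂ} (hy : y ∈ Metric.closedBall s (1 / 4)) : 1 / 4 ≤ y.re := by
    have hdist := (abs_le.mp ((abs_re_le_norm (y - s)).trans (mem_closedBall_iff_norm.mp hy))).1
    rw [sub_re] at hdist
    linarith
  have hsphere : ∀ y ∈ Metric.sphere s (1 / 4), ‖riemannZeta₁ y / y‖ ≤ 16 * ‖s‖ := by
    intro y hy
    have hy_re := hre (Metric.sphere_subset_closedBall hy)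
    have hy_norm : ‖y - 1‖ ≤ ‖s‖ + 5 / 4 := by
      calc ‖y - 1‖ = ‖(y - s) + (s - 1)‖ := by rw [sub_add_sub_cancel]
        _ ≤ ‖y - s‖ + (‖s‖ + ‖(1 : ℂ)‖) := norm_add_le_of_le le_rfl (norm_sub_le _ _)
        _ = ‖s‖ + 5 / 4 := by
          rw [mem_sphere_iff_norm.mp hy, norm_one]
          ring
    calc ‖riemannZeta₁ y / y‖ ≤ 1 + ‖y - 1‖ / y.re := norm_riemannZeta₁_div_self_le (by linarith)
      _ ≤ 1 + (‖s‖ + 5 / 4) / (1 / 4) := by gcongr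
      _ ≤ 16 * ‖s‖ := by linarith
  have hdiff : DifferentiableOn ℂ (fun z => riemannZeta₁ z / z) (Metric.closedBall s (1 / 4)) := by
    refine differentiable_riemannZeta₁.differentiableOn.fun_div differentiableOn_id fun y hy => ?_
    exact norm_pos_iff.mp (by linarith [hre hy, re_le_norm y])
  refine (norm_deriv_le_of_forall_mem_sphere_norm_le (by norm_num)
    (hdiff.diffContOnCl_ball subset_rfl) hsphere).trans_eq ?_
  ring

lemma norm_add_norm_inv_le (hs : 1 / 2 ≤ s.re) : ‖s + (‖s‖⁻¹ : ℝ)‖ ≤ 5 * ‖s‖ := by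
  have hhalf := half_le_norm_of_half_le_re hs
  have hinv : ‖s‖⁻¹ ≤ 4 * ‖s‖ := by
    rw [inv_le_iff_one_le_mul₀ (by linarith)]
    nlinarith
  calc ‖s + (‖s‖⁻¹ : ℝ)‖ ≤ ‖s‖ + ‖s‖⁻¹ := by
        simpa only [norm_real, norm_inv, norm_norm] using norm_add_le s (‖s‖⁻¹ : ℝ)
    _ ≤ 5 * ‖s‖ := by linarith

lemma norm_riemannZeta₁_div_self_sub_add_inv_norm_le (hs : 1 / 2 ≤ s.re) :
    ‖riemannZeta₁ s / s - riemannZeta₁ (s + (‖s‖⁻¹ : ℝ)) / (s + (‖s‖⁻¹ : ℝ))‖ ≤ 320 := by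
  have hhalf := half_le_norm_of_half_le_re hs
  have hs₀ : 0 < ‖s‖ := by linarith
  have hnorm := norm_add_norm_inv_le hs
  have hconv : Convex ℝ ({z : ℂ | 1 / 2 ≤ z.re} ∩ Metric.closedBall 0 (5 * ‖s‖)) :=
    (convex_halfSpace_re_ge _).inter (convex_closedBall _ _)
  have hmean := hconv.norm_image_sub_le_of_norm_deriv_le (𝕜 := ℂ)
    (f := fun z => riemannZeta₁ z / z) (C := 320 * ‖s‖)
    (fun z hz => (differentiable_riemannZeta₁ z).div differentiableAt_id
      (norm_pos_iff.mp (by linarith [half_le_norm_of_half_le_re hz.1])))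
    (fun z hz => (norm_deriv_riemannZeta₁_div_self_le hz.1).trans
      (by linarith [mem_closedBall_zero_iff.mp hz.2]))
    (x := s + (‖s‖⁻¹ : ℝ)) (y := s)
    ⟨by simpa using hs.trans (le_add_of_nonneg_right (by positivity)), by simpa using hnorm⟩
    ⟨hs, by simpa using (by linarith : ‖s‖ ≤ 5 * ‖s‖)⟩
  rwa [sub_add_cancel_left, norm_neg, norm_real, norm_inv, norm_norm,
    mul_inv_cancel_right₀ hs₀.ne'] at hmean

lemma norm_riemannZeta₁_div_self_add_inv_norm_pow_le
    (hk : Summable fun m : ℕ => ell k (m - k) ^ 2) (hs : s.re = 1 / 2) :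
    ‖riemannZeta₁ (s + (‖s‖⁻¹ : ℝ)) / (s + (‖s‖⁻¹ : ℝ))‖ ^ (2 * k) ≤
      25 / 2 * (∑' m : ℕ, ell k (m - k) ^ 2) * ‖s‖ ^ 3 := by
  have hs₀ : 0 < ‖s‖ := by linarith [half_le_norm_of_half_le_re hs.ge]
  set z := s + (‖s‖⁻¹ : ℝ)
  have hz : z.re = 1 / 2 + ‖s‖⁻¹ := by rw [add_re, ofReal_re, hs]
  have hS : 0 ≤ ∑' m : ℕ, ell k (m - k) ^ 2 := tsum_nonneg fun m => sq_nonneg _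
  have hpow : ‖riemannZeta₁ z / z‖ ^ (2 * k) * (2 * ‖s‖⁻¹) ≤
      (∑' m : ℕ, ell k (m - k) ^ 2) * (5 * ‖s‖) ^ 2 := by
    calc ‖riemannZeta₁ z / z‖ ^ (2 * k) * (2 * ‖s‖⁻¹)
        = ‖riemannZeta₁ z / z‖ ^ (2 * k) * (2 * z.re - 1) := by rw [hz]; ring
      _ ≤ (∑' m : ℕ, ell k (m - k) ^ 2) * ‖z‖ ^ 2 :=
        norm_riemannZeta₁_div_self_pow_mul_le hk (by rw [hz]; linarith [inv_pos.mpr hs₀])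
      _ ≤ (∑' m : ℕ, ell k (m - k) ^ 2) * (5 * ‖s‖) ^ 2 := mul_le_mul_of_nonneg_left
        (pow_le_pow_left₀ (norm_nonneg z) (norm_add_norm_inv_le hs.ge) 2) hS
  calc ‖riemannZeta₁ z / z‖ ^ (2 * k)
      = ‖riemannZeta₁ z / z‖ ^ (2 * k) * (2 * ‖s‖⁻¹) * (‖s‖ / 2) := by field_simp
    _ ≤ (∑' m : ℕ, ell k (m - k) ^ 2) * (5 * ‖s‖) ^ 2 * (‖s‖ / 2) := by gcongr
    _ = 25 / 2 * (∑' m : ℕ, ell k (m - k) ^ 2) * ‖s‖ ^ 3 := by ring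

lemma hasCriticalLineExponent_of_summable_ell_sq (hk₀ : 0 < k)
    (hk : Summable fun m : ℕ => ell k (m - k) ^ 2) : HasCriticalLineExponent (3 / (2 * k)) := by
  set A := 25 / 2 * ∑' m : ℕ, ell k (m - k) ^ 2
  have hA : 0 ≤ A := mul_nonneg (by norm_num) (tsum_nonneg fun m => sq_nonneg _)
  set a : ℝ := 3 / (2 * k)
  refine ⟨320 * 2 ^ a + A ^ (1 / (2 * k) : ℝ), fun s hs => ?_⟩
  have hhalf := half_le_norm_of_half_le_re hs.ge
  set z := s + (‖s‖⁻¹ : ℝ)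
  have hz : ‖riemannZeta₁ z / z‖ ≤ A ^ (1 / (2 * k) : ℝ) * ‖s‖ ^ a := by
    refine le_of_pow_le_pow_left₀ (n := 2 * k) (by positivity) (by positivity) ?_
    refine (norm_riemannZeta₁_div_self_add_inv_norm_pow_le hk hs).trans_eq ?_
    rw [mul_pow, ← Real.rpow_mul_natCast hA, ← Real.rpow_mul_natCast (norm_nonneg s)]
    push_cast
    rw [one_div_mul_cancel (by positivity), div_mul_cancel₀ _ (by positivity), Real.rpow_one,
      Real.rpow_ofNat]
  have hone : 1 ≤ 2 ^ a * ‖s‖ ^ a := by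
    rw [← Real.mul_rpow zero_le_two (norm_nonneg s)]
    exact Real.one_le_rpow (by linarith) (by positivity)
  calc ‖riemannZeta s‖ = ‖riemannZeta₁ s / s‖ := (norm_riemannZeta₁_div_self_of_re_eq_half hs).symm
    _ ≤ ‖riemannZeta₁ s / s - riemannZeta₁ z / z‖ + ‖riemannZeta₁ z / z‖ := by
      simpa only [sub_add_cancel] using
        norm_add_le (riemannZeta₁ s / s - riemannZeta₁ z / z) (riemannZeta₁ z / z)
    _ ≤ 320 + A ^ (1 / (2 * k) : ℝ) * ‖s‖ ^ a :=
      add_le_add (norm_riemannZeta₁_div_self_sub_add_inv_norm_le hs.ge) hz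
    _ ≤ 320 * (2 ^ a * ‖s‖ ^ a) + A ^ (1 / (2 * k) : ℝ) * ‖s‖ ^ a := by linarith
    _ = (320 * 2 ^ a + A ^ (1 / (2 * k) : ℝ)) * ‖s‖ ^ a := by ring

end SummableImpliesExponent

section ExponentImpliesSummable

variable {a : ℝ}

lemma HasCriticalLineExponent.exists_norm_riemannZeta₁_div_self_le
    (h : HasCriticalLineExponent a) (ha : 0 ≤ a) :
    ∃ C, ∀ s : ℂ, 1 / 2 ≤ s.re → ‖riemannZeta₁ s / s‖ ≤ C * ‖s‖ ^ a := by
  obtain ⟨C, hC⟩ := h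
  refine ⟨C, fun s hs => norm_le_mul_norm_rpow_of_half_plane (g := fun z => riemannZeta₁ z / z)
    (A := 3) (B := 1) (M := 2) ha one_half_pos zero_le_one (fun z hz => ?_) (fun z hz => ?_)
    (fun x hx => ?_) (fun z hz => ?_) hs⟩
  · exact (differentiable_riemannZeta₁ z).fun_div differentiableAt_id
      (norm_pos_iff.mp (by linarith [half_le_norm_of_half_le_re hz]))
  · calc ‖riemannZeta₁ z / z‖ ≤ 1 + ‖z - 1‖ / z.re := norm_riemannZeta₁_div_self_le (by linarith)
      _ ≤ 1 + (‖z‖ + 1) / (1 / 2) := by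
        gcongr
        simpa using norm_sub_le z 1
      _ ≤ 3 * (‖z‖ + 1) := by linarith [norm_nonneg z]
      _ ≤ 3 * Real.exp (1 * ‖z‖) := by
        rw [one_mul]
        gcongr
        exact Real.add_one_le_exp _
  · have hx₀ : 0 < x := by linarith
    have hdist : ‖(x : ℂ) - 1‖ ≤ x := by
      rw [← ofReal_one, ← ofReal_sub, norm_real, Real.norm_eq_abs, abs_le]
      constructor <;> linarith
    calc ‖riemannZeta₁ x / x‖ ≤ 1 + ‖(x : ℂ) - 1‖ / x :=
          norm_riemannZeta₁_div_self_le (s := x) hx₀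
      _ ≤ 1 + 1 := by
        gcongr
        exact div_le_one_of_le₀ hdist hx₀.le
      _ = 2 := one_add_one_eq_two
  · rw [norm_riemannZeta₁_div_self_of_re_eq_half hz]
    exact hC z hz

lemma half_lt_re_inv_one_sub {w : ℂ} (hw : ‖w‖ < 1) : 1 / 2 < (1 - w)⁻¹.re := by
  have hnorm_sq : 0 < normSq (1 - w) := normSq_pos.mpr (one_sub_ne_zero_of_norm_lt_one hw)
  have hw_sq : w.re * w.re + w.im * w.im < 1 := by
    rw [← normSq_apply, ← Complex.sq_norm]
    exact pow_lt_one₀ (norm_nonneg w) hw two_ne_zero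
  rw [inv_re, lt_div_iff₀ hnorm_sq, normSq_apply]
  simp only [sub_re, one_re, sub_im, one_im]
  linarith

lemma HasCriticalLineExponent.exists_norm_zetaDisc_le (h : HasCriticalLineExponent a)
    (ha : 0 ≤ a) : ∃ C, ∀ w : ℂ, ‖w‖ < 1 → ‖zetaDisc w‖ ≤ C * ‖1 - w‖ ^ (-a) := by
  obtain ⟨C, hC⟩ := h.exists_norm_riemannZeta₁_div_self_le ha
  refine ⟨C, fun w hw => ?_⟩
  have hbound := hC (1 - w)⁻¹ (half_lt_re_inv_one_sub hw).le
  rwa [← zetaDisc_one_sub_inv, inv_inv, sub_sub_cancel, norm_inv, Real.inv_rpow (norm_nonneg _),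
    ← Real.rpow_neg (norm_nonneg _)] at hbound

lemma HasCriticalLineExponent.summable_ell_sq {k : ℕ} (h : HasCriticalLineExponent a) (ha : 0 ≤ a)
    (hk : a * k < 1 / 2) : Summable fun m : ℕ => ell k (m - k) ^ 2 := by
  obtain ⟨C, hC⟩ := h.exists_norm_zetaDisc_le ha
  simp only [← norm_sq_neg_one_pow_mul_ell k]
  refine summable_norm_sq_of_norm_le_rpow (fun w hw => hasSum_ell_mul_pow k hw) (C := C ^ k)
    (mul_nonneg ha (Nat.cast_nonneg k)) hk fun w hw => ?_
  calc ‖zetaDisc w ^ k‖ ≤ (C * ‖1 - w‖ ^ (-a)) ^ k := by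
        rw [norm_pow]
        gcongr
        exact hC w hw
    _ = C ^ k * ‖1 - w‖ ^ (-(a * k)) := by
      rw [mul_pow, ← Real.rpow_mul_natCast (norm_nonneg _), neg_mul]

end ExponentImpliesSummable

theorem stmt1 :
    LindelofHypothesis ↔
      ∀ k : ℕ, 0 < k → Summable fun m : ℕ => (ell k ((m : ℤ) - k)) ^ 2 := by
  constructor
  · intro h k hk
    have hε : (0 : ℝ) < 1 / (4 * k) := by positivity
    refine (h.hasCriticalLineExponent hε).summable_ell_sq hε.le ?_
    field_simp
    norm_num
  · intro h
    refine lindelofHypothesis_of_forall_hasCriticalLineExponent fun ε hε => ?_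
    obtain ⟨k, hk⟩ := exists_nat_gt (3 / (2 * ε))
    have hk₀ : (0 : ℝ) < k := lt_trans (by positivity) hk
    refine (hasCriticalLineExponent_of_summable_ell_sq (Nat.cast_pos.mp hk₀)
      (h k (Nat.cast_pos.mp hk₀))).mono ?_
    rw [div_lt_iff₀ (by positivity)] at hk
    rw [div_le_iff₀ (by positivity)]
    linarith
end

section
/- For every positive integer k and every integer n ≥ 0, the integral ∫_1^∞ Δ_k(x) L_n(log x) x^{-2} dx converges absolutely and equals (-1)^n ℓ_{n,k}. -/
open scoped Real Topology
open Complex Filter MeasureTheory Finset Asymptotics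

/-!
Put `f x = (∑ n ≤ x, d_k n) / x`. By induction on `k`, Dirichlet's hyperbola method yields a
polynomial `Q` with `f x = Q (log x) + O(x ^ (-δ))`, and partial summation turns
`∑ d_k n * n ^ (-s) = ζ(s) ^ k` into `∫_1^∞ f x * x ^ (-s) dx = ζ(s) ^ k / s` for `re s > 1`.
Since `∫_1^∞ (log x) ^ j * x ^ (-s) dx = j! / (s - 1) ^ (j + 1)`, the contribution of `Q` is a sum
of pure poles, while that of the remainder is holomorphic at `1`. Comparison with the Laurent
expansion of `ζ(s) ^ k / s` therefore forces `Q = P_k`, and the remainder `Δ_k x / x` transforms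
into the regular part. Differentiating `m` times at `s = 1` expresses
`∫_1^∞ Δ_k x * (log x) ^ m / x ^ 2 dx` by a Taylor coefficient of `(s - 1) ^ k * ζ(s) ^ k / s`.
Because `s = 1 + (s - 1)`, two consecutive such coefficients add up to `λ_{j,k} / j!`, so that
Pascal's rule collapses the binomial combination prescribed by `L_n` into `ℓ_{n,k}`.
-/

open scoped Polynomial

/-! ### Polynomials in the logarithm up to a power saving -/

lemma isBigO_rpow_rpow_Ici {a b : ℝ} (h : a ≤ b) :
    (fun x : ℝ => x ^ a) =O[𝓟 (Set.Ici 1)] fun x => x ^ b := by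
  refine isBigO_principal.2 ⟨1, fun x (hx : 1 ≤ x) => ?_⟩
  have hx0 : 0 ≤ x := zero_le_one.trans hx
  rw [one_mul, Real.norm_of_nonneg (Real.rpow_nonneg hx0 a),
    Real.norm_of_nonneg (Real.rpow_nonneg hx0 b)]
  exact Real.rpow_le_rpow_of_exponent_le hx h

lemma rpow_mul_rpow_eventuallyEq_Ici (a b : ℝ) :
    (fun x : ℝ => x ^ a * x ^ b) =ᶠ[𝓟 (Set.Ici 1)] fun x => x ^ (a + b) :=
  eventually_principal.2 fun _ hx => (Real.rpow_add (zero_lt_one.trans_le hx) a b).symm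

lemma isBigO_log_rpow_Ici {ε : ℝ} (hε : 0 < ε) :
    Real.log =O[𝓟 (Set.Ici 1)] fun x => x ^ ε := by
  refine isBigO_principal.2 ⟨ε⁻¹, fun x (hx : 1 ≤ x) => ?_⟩
  have hx0 : 0 ≤ x := zero_le_one.trans hx
  rw [Real.norm_of_nonneg (Real.log_nonneg hx), Real.norm_of_nonneg (Real.rpow_nonneg hx0 ε),
    inv_mul_eq_div]
  exact Real.log_le_rpow_div hx0 hε

lemma isBigO_log_pow_rpow_Ici (n : ℕ) {ε : ℝ} (hε : 0 < ε) :
    (fun x => Real.log x ^ n) =O[𝓟 (Set.Ici 1)] fun x => x ^ ε := by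
  induction n generalizing ε with
  | zero => simpa using isBigO_rpow_rpow_Ici hε.le
  | succ n ih =>
    simpa only [pow_succ, add_halves] using
      ((ih (half_pos hε)).mul (isBigO_log_rpow_Ici (half_pos hε))).trans_eventuallyEq
        (rpow_mul_rpow_eventuallyEq_Ici _ _)

lemma isBigO_eval_log_rpow_Ici (Q : ℝ[X]) {ε : ℝ} (hε : 0 < ε) :
    (fun x => Q.eval (Real.log x)) =O[𝓟 (Set.Ici 1)] fun x => x ^ ε := by
  simp only [Polynomial.eval_eq_sum_range]
  exact IsBigO.fun_sum fun n _ => (isBigO_log_pow_rpow_Ici n hε).const_mul_left _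

/-- `f x` agrees on `[1, ∞)` with a polynomial in `log x` up to a power saving `O(x ^ (-δ))`, the
implied constant being uniform on the whole half-line and not only near infinity. -/
def LogPolyApprox (f : ℝ → ℝ) : Prop :=
  ∃ Q : ℝ[X], ∃ δ : ℝ, 0 < δ ∧
    (fun x => f x - Q.eval (Real.log x)) =O[𝓟 (Set.Ici 1)] fun x => x ^ (-δ)

namespace LogPolyApprox

variable {f g : ℝ → ℝ}

lemma of_eqOn (Q : ℝ[X]) (h : ∀ x, 1 ≤ x → f x = Q.eval (Real.log x)) : LogPolyApprox f :=
  ⟨Q, 1, one_pos, (isBigO_zero _ _).congr' (eventually_principal.2 fun x hx =>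
    (sub_eq_zero.2 (h x hx)).symm) EventuallyEq.rfl⟩

lemma const (c : ℝ) : LogPolyApprox fun _ => c := of_eqOn (Polynomial.C c) (by simp)

lemma log_pow (m : ℕ) : LogPolyApprox fun x => Real.log x ^ m :=
  of_eqOn (Polynomial.X ^ m) (by simp)

lemma of_isBigO {δ : ℝ} (hδ : 0 < δ) (h : f =O[𝓟 (Set.Ici 1)] fun x => x ^ (-δ)) :
    LogPolyApprox f :=
  ⟨0, δ, hδ, by simpa using h⟩

lemma congr (hf : LogPolyApprox f) (h : ∀ x, 1 ≤ x → f x = g x) : LogPolyApprox g := by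
  obtain ⟨Q, δ, hδ, hQ⟩ := hf
  exact ⟨Q, δ, hδ, hQ.congr' (eventually_principal.2 fun x hx => by simp only [h x hx])
    EventuallyEq.rfl⟩

lemma isBigO_rpow (hf : LogPolyApprox f) {ε : ℝ} (hε : 0 < ε) :
    f =O[𝓟 (Set.Ici 1)] fun x => x ^ ε := by
  obtain ⟨Q, δ, hδ, hQ⟩ := hf
  simpa using (hQ.trans (isBigO_rpow_rpow_Ici (by linarith))).add (isBigO_eval_log_rpow_Ici Q hε)

lemma add (hf : LogPolyApprox f) (hg : LogPolyApprox g) : LogPolyApprox fun x => f x + g x := by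
  obtain ⟨P, δ, hδ, hP⟩ := hf
  obtain ⟨Q, η, hη, hQ⟩ := hg
  refine ⟨P + Q, min δ η, lt_min hδ hη, ?_⟩
  simp only [Polynomial.eval_add, add_sub_add_comm]
  exact (hP.trans (isBigO_rpow_rpow_Ici (neg_le_neg (min_le_left _ _)))).add
    (hQ.trans (isBigO_rpow_rpow_Ici (neg_le_neg (min_le_right _ _))))

lemma sum {ι : Type*} (s : Finset ι) {F : ι → ℝ → ℝ} (h : ∀ i ∈ s, LogPolyApprox (F i)) :
    LogPolyApprox fun x => ∑ i ∈ s, F i x := by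
  classical
  induction s using Finset.induction_on with
  | empty => simpa using const 0
  | insert i s hi ih =>
    simp only [Finset.sum_insert hi]
    exact (h i (Finset.mem_insert_self i s)).add
      (ih fun j hj => h j (Finset.mem_insert_of_mem hj))

lemma mul (hf : LogPolyApprox f) (hg : LogPolyApprox g) : LogPolyApprox fun x => f x * g x := by
  obtain ⟨P, δ, hδ, hP⟩ := hf
  obtain ⟨Q, η, hη, hQ⟩ := id hg
  set μ := min δ η
  have hμ : 0 < μ := lt_min hδ hη
  have hexp : -μ + μ / 2 = -(μ / 2) := by ring
  have hleft : (fun x => (f x - P.eval (Real.log x)) * g x) =O[𝓟 (Set.Ici 1)]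
      fun x => x ^ (-(μ / 2)) := by
    rw [← hexp]
    exact ((hP.trans (isBigO_rpow_rpow_Ici (neg_le_neg (min_le_left _ _)))).mul
      (hg.isBigO_rpow (half_pos hμ))).trans_eventuallyEq (rpow_mul_rpow_eventuallyEq_Ici _ _)
  have hright : (fun x => (g x - Q.eval (Real.log x)) * P.eval (Real.log x)) =O[𝓟 (Set.Ici 1)]
      fun x => x ^ (-(μ / 2)) := by
    rw [← hexp]
    exact ((hQ.trans (isBigO_rpow_rpow_Ici (neg_le_neg (min_le_right _ _)))).mul
      (isBigO_eval_log_rpow_Ici P (half_pos hμ))).trans_eventuallyEq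
        (rpow_mul_rpow_eventuallyEq_Ici _ _)
  refine ⟨P * Q, μ / 2, half_pos hμ, (hleft.add hright).congr_left fun x => ?_⟩
  rw [Polynomial.eval_mul]
  ring

lemma sub (hf : LogPolyApprox f) (hg : LogPolyApprox g) : LogPolyApprox fun x => f x - g x :=
  (hf.add ((const (-1)).mul hg)).congr fun x _ => by ring

lemma comp_sqrt (hf : LogPolyApprox f) : LogPolyApprox fun x => f √x := by
  obtain ⟨Q, δ, hδ, hQ⟩ := hf
  have hsqrt : Tendsto Real.sqrt (𝓟 (Set.Ici 1)) (𝓟 (Set.Ici 1)) :=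
    tendsto_principal_principal.2 fun _ hx => Real.one_le_sqrt.2 hx
  refine ⟨Q.comp (Polynomial.C (1 / 2) * Polynomial.X), δ / 2, half_pos hδ,
    (hQ.comp_tendsto hsqrt).congr' (eventually_principal.2 fun x hx => ?_)
      (eventually_principal.2 fun x hx => ?_)⟩
  · have hx0 : 0 ≤ x := zero_le_one.trans hx
    simp [Real.log_sqrt hx0, div_eq_inv_mul]
  · have hx0 : 0 ≤ x := zero_le_one.trans hx
    rw [Function.comp_apply, Real.sqrt_eq_rpow, ← Real.rpow_mul hx0]
    ring_nf

end LogPolyApprox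

lemma exists_derivative_eq {K : Type*} [Field K] [CharZero K] (Q : K[X]) :
    ∃ R : K[X], R.derivative = Q := by
  induction Q using Polynomial.induction_on' with
  | add p q hp hq =>
    obtain ⟨P, rfl⟩ := hp
    obtain ⟨R, rfl⟩ := hq
    exact ⟨P + R, Polynomial.derivative_add⟩
  | monomial n a =>
    refine ⟨Polynomial.monomial (n + 1) (a / (n + 1)), ?_⟩
    rw [Polynomial.derivative_monomial, Nat.add_sub_cancel, Nat.cast_succ,
      div_mul_cancel₀ _ (Nat.cast_add_one_ne_zero n)]

lemma continuousOn_eval_log_div (Q : ℝ[X]) (x : ℝ) :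
    ContinuousOn (fun t => Q.eval (Real.log t) / t) (Set.Icc 1 x) := by
  have hne : ∀ t ∈ Set.Icc 1 x, t ≠ 0 := fun t ht => (zero_lt_one.trans_le ht.1).ne'
  exact (Q.continuous.comp_continuousOn (Real.continuousOn_log.mono hne)).div continuousOn_id hne

lemma integral_Ioc_derivative_eval_log_div (R : ℝ[X]) {x : ℝ} (hx : 1 ≤ x) :
    ∫ t in Set.Ioc 1 x, R.derivative.eval (Real.log t) / t = R.eval (Real.log x) - R.eval 0 := by
  have hderiv : ∀ t ∈ Set.uIcc 1 x, HasDerivAt (fun t => R.eval (Real.log t))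
      (R.derivative.eval (Real.log t) / t) t := fun t ht => by
    rw [Set.uIcc_of_le hx] at ht
    rw [div_eq_mul_inv]
    exact (R.hasDerivAt _).comp t (Real.hasDerivAt_log (zero_lt_one.trans_le ht.1).ne')
  rw [← intervalIntegral.integral_of_le hx, intervalIntegral.integral_eq_sub_of_hasDerivAt hderiv
    ((continuousOn_eval_log_div _ x).intervalIntegrable_of_Icc hx), Real.log_one]

section PowerTail

variable {e : ℝ → ℝ} {δ : ℝ}

lemma integrableOn_Ioi_of_isBigO_rpow (hδ : 0 < δ)
    (he : e =O[𝓟 (Set.Ici 1)] fun t => t ^ (-δ - 1)) (hm : Measurable e) :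
    IntegrableOn e (Set.Ioi 1) := by
  obtain ⟨C, hC⟩ := isBigO_principal.1 he
  refine ((integrableOn_Ioi_rpow_of_lt (by linarith : -δ - 1 < -1) one_pos).norm.const_mul C).mono'
    hm.aestronglyMeasurable ?_
  filter_upwards [ae_restrict_mem measurableSet_Ioi] with t ht
  exact hC t (Set.Ioi_subset_Ici_self ht)

lemma isBigO_integral_Ioi_rpow (hδ : 0 < δ) (he : e =O[𝓟 (Set.Ici 1)] fun t => t ^ (-δ - 1)) :
    (fun x => ∫ t in Set.Ioi x, e t) =O[𝓟 (Set.Ici 1)] fun x => x ^ (-δ) := by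
  obtain ⟨C, hC⟩ := isBigO_principal.1 he
  refine isBigO_principal.2 ⟨C / δ, fun x (hx : 1 ≤ x) => ?_⟩
  have hx0 : 0 < x := zero_lt_one.trans_le hx
  calc ‖∫ t in Set.Ioi x, e t‖ ≤ ∫ t in Set.Ioi x, C * t ^ (-δ - 1) := by
        refine norm_integral_le_of_norm_le
          ((integrableOn_Ioi_rpow_of_lt (by linarith) hx0).const_mul C) ?_
        filter_upwards [ae_restrict_mem measurableSet_Ioi] with t ht
        have hxt : x ≤ t := le_of_lt ht
        simpa only [Real.norm_of_nonneg (Real.rpow_nonneg (hx0.le.trans hxt) _)] using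
          hC t (hx.trans hxt)
    _ = C / δ * ‖x ^ (-δ)‖ := by
        rw [integral_const_mul, integral_Ioi_rpow_of_lt (by linarith) hx0,
          Real.norm_of_nonneg (Real.rpow_nonneg hx0.le _), sub_add_cancel, neg_div_neg_eq]
        ring

end PowerTail

lemma LogPolyApprox.integral {f : ℝ → ℝ} (hf : LogPolyApprox f) (hm : Measurable f) :
    LogPolyApprox fun x => ∫ t in Set.Ioc 1 x, f t / t := by
  obtain ⟨Q, δ, hδ, hQ⟩ := hf
  obtain ⟨R, rfl⟩ := exists_derivative_eq Q
  set e : ℝ → ℝ := fun t => (f t - R.derivative.eval (Real.log t)) / t with he_def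
  have hem : Measurable e :=
    (hm.sub (R.derivative.continuous.measurable.comp Real.measurable_log)).div measurable_id
  have he : e =O[𝓟 (Set.Ici 1)] fun t => t ^ (-δ - 1) := by
    simp only [he_def, div_eq_mul_inv]
    refine (hQ.mul (isBigO_refl (fun t : ℝ => t⁻¹) _)).trans_eventuallyEq ?_
    filter_upwards [mem_principal_self _] with t ht
    rw [Real.rpow_sub_one (zero_lt_one.trans_le ht).ne', div_eq_mul_inv]
  have heI : IntegrableOn e (Set.Ioi 1) := integrableOn_Ioi_of_isBigO_rpow hδ he hem
  refine ((of_eqOn (R + Polynomial.C ((∫ t in Set.Ioi 1, e t) - R.eval 0)) fun _ _ => rfl).sub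
    (of_isBigO hδ (isBigO_integral_Ioi_rpow hδ he))).congr fun x hx => ?_
  have hsplit : ∫ t in Set.Ioc 1 x, f t / t
      = (∫ t in Set.Ioc 1 x, R.derivative.eval (Real.log t) / t) + ∫ t in Set.Ioc 1 x, e t := by
    rw [← integral_add ((continuousOn_eval_log_div _ x).integrableOn_Icc.mono_set
      Set.Ioc_subset_Icc_self) (heI.mono_set Set.Ioc_subset_Ioi_self)]
    simp only [he_def, ← add_div, add_sub_cancel]
  have htail : ∫ t in Set.Ioi 1, e t = (∫ t in Set.Ioc 1 x, e t) + ∫ t in Set.Ioi x, e t := by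
    rw [← Set.Ioc_union_Ioi_eq_Ioi hx]
    exact setIntegral_union (Set.Ioc_disjoint_Ioi le_rfl) measurableSet_Ioi
      (heI.mono_set Set.Ioc_subset_Ioi_self) (heI.mono_set (Set.Ioi_subset_Ioi hx))
  rw [hsplit, htail, integral_Ioc_derivative_eval_log_div R hx, Polynomial.eval_add,
    Polynomial.eval_C]
  ring

/-! ### Summatory functions and the hyperbola method -/

/-- The summatory function `x ↦ ∑_{1 ≤ n ≤ x} a n`; the value `a 0` plays no part in it. -/
noncomputable def summatory (a : ℕ → ℝ) (x : ℝ) : ℝ := ∑ n ∈ Ioc 0 ⌊x⌋₊, a n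

lemma measurable_summatory (a : ℕ → ℝ) : Measurable (summatory a) :=
  (measurable_from_nat (f := fun N : ℕ => ∑ n ∈ Ioc 0 N, a n)).comp Nat.measurable_floor

lemma summatory_nonneg {a : ℕ → ℝ} (ha : ∀ n, 0 ≤ a n) (x : ℝ) : 0 ≤ summatory a x :=
  Finset.sum_nonneg fun n _ => ha n

lemma summatory_mul_eq_sub_integral {a : ℕ → ℝ} (ha : a 0 = 0) {φ φ' : ℝ → ℝ} {x : ℝ}
    (hφ : ∀ t ∈ Set.Icc 1 x, HasDerivAt φ (φ' t) t) (hφ' : IntegrableOn φ' (Set.Icc 1 x)) :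
    summatory (fun n => φ n * a n) x
      = φ x * summatory a x - ∫ t in Set.Ioc 1 x, φ' t * summatory a t := by
  have hIcc : ∀ b : ℕ → ℝ, b 0 = 0 → ∀ N, ∑ n ∈ Icc 0 N, b n = ∑ n ∈ Ioc 0 N, b n :=
    fun b hb N => by rw [Icc_eq_cons_Ioc N.zero_le, sum_cons, hb, zero_add]
  have habel := sum_mul_eq_sub_integral_mul₀ a ha x (fun t ht => (hφ t ht).differentiableAt)
    (hφ'.congr_fun (fun t ht => (hφ t ht).deriv.symm) measurableSet_Icc)
  rw [hIcc (fun n => φ n * a n) (by simp [ha])] at habel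
  simp only [hIcc a ha] at habel
  rw [summatory, habel, summatory]
  congr 1
  refine setIntegral_congr_fun measurableSet_Ioc fun t ht => ?_
  rw [summatory, (hφ t (Set.Ioc_subset_Icc_self ht)).deriv]

lemma LogPolyApprox.summatory_log_pow_div {a : ℕ → ℝ} (ha : a 0 = 0)
    (hS : LogPolyApprox fun x => summatory a x / x) (m : ℕ) :
    LogPolyApprox (summatory fun n => Real.log n ^ m / n * a n) := by
  set ψ : ℝ → ℝ := fun t => m * Real.log t ^ (m - 1) - Real.log t ^ m with hψ_def
  have hψ : LogPolyApprox ψ := ((const m).mul (log_pow (m - 1))).sub (log_pow m)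
  have hψS : Measurable fun t => ψ t * (summatory a t / t) := by
    have := measurable_summatory a
    fun_prop
  refine (((log_pow m).mul hS).sub ((hψ.mul hS).integral hψS)).congr fun x _ => ?_
  have hne : ∀ t ∈ Set.Icc 1 x, t ≠ 0 := fun t ht => (zero_lt_one.trans_le ht.1).ne'
  have hφ : ∀ t ∈ Set.Icc 1 x, HasDerivAt (fun t => Real.log t ^ m / t) (ψ t / t ^ 2) t :=
    fun t ht => by
      refine (((Real.hasDerivAt_log (hne t ht)).pow m).div (hasDerivAt_id t)
        (hne t ht)).congr_deriv ?_
      simp only [hψ_def, id_eq, Pi.pow_apply]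
      field_simp [hne t ht]
  have hφ' : ContinuousOn (fun t => ψ t / t ^ 2) (Set.Icc 1 x) := by
    have hlog : ContinuousOn Real.log (Set.Icc 1 x) := Real.continuousOn_log.mono hne
    exact ((continuousOn_const.mul (hlog.pow _)).sub (hlog.pow _)).div (continuousOn_id.pow 2)
      fun t ht => pow_ne_zero 2 (hne t ht)
  rw [summatory_mul_eq_sub_integral ha hφ hφ'.integrableOn_Icc]
  congr 1
  · ring
  · refine integral_congr_ae (ae_of_all _ fun t => ?_)
    ring

lemma eval_sub_eq_sum_hasseDeriv {R : Type*} [CommRing R] (Q : R[X]) (u v : R) :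
    Q.eval (u - v)
      = ∑ m ∈ range (Q.natDegree + 1), (Polynomial.hasseDeriv m Q).eval u * (-v) ^ m := by
  rw [sub_eq_neg_add, ← Polynomial.taylor_eval, Polynomial.eval_eq_sum_range,
    Polynomial.natDegree_taylor]
  simp only [Polynomial.taylor_coeff]

section WeightedSum

variable {a : ℕ → ℝ}

lemma LogPolyApprox.summatory_eval_log_div (ha : a 0 = 0)
    (hS : LogPolyApprox fun x => summatory a x / x) (Q : ℝ[X]) :
    LogPolyApprox fun x => summatory (fun n => Q.eval (Real.log (x / n)) * (a n / n)) √x := by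
  refine (LogPolyApprox.sum (range (Q.natDegree + 1)) fun m _ =>
    (of_eqOn (Polynomial.hasseDeriv m Q) fun _ _ => rfl).mul
      ((const ((-1) ^ m)).mul (hS.summatory_log_pow_div ha m).comp_sqrt)).congr fun x hx => ?_
  simp only [summatory, Finset.mul_sum]
  rw [Finset.sum_comm]
  refine Finset.sum_congr rfl fun n hn => ?_
  have hn0 : (n : ℝ) ≠ 0 := Nat.cast_ne_zero.2 (Finset.mem_Ioc.1 hn).1.ne'
  rw [Real.log_div (zero_lt_one.trans_le hx).ne' hn0, eval_sub_eq_sum_hasseDeriv, Finset.sum_mul]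
  refine Finset.sum_congr rfl fun m _ => ?_
  rw [neg_pow]
  ring

lemma sqrt_le_div_of_mem_Ioc {x : ℝ} (hx : 0 ≤ x) {n : ℕ} (hn : n ∈ Ioc 0 ⌊√x⌋₊) :
    √x ≤ x / n := by
  obtain ⟨hn0, hnx⟩ := Finset.mem_Ioc.1 hn
  have hn_le : (n : ℝ) ≤ √x := (Nat.cast_le.2 hnx).trans (Nat.floor_le (Real.sqrt_nonneg x))
  rw [le_div_iff₀ (Nat.cast_pos.2 hn0)]
  exact (mul_le_mul_of_nonneg_left hn_le (Real.sqrt_nonneg x)).trans (Real.mul_self_sqrt hx).le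

lemma isBigO_summatory_comp_div (ha₀ : a 0 = 0) (ha : ∀ n, 0 ≤ a n)
    (hS : LogPolyApprox fun x => summatory a x / x) {e : ℝ → ℝ} {δ : ℝ} (hδ : 0 < δ)
    (he : e =O[𝓟 (Set.Ici 1)] fun x => x ^ (-δ)) :
    (fun x => summatory (fun n => e (x / n) * (a n / n)) √x) =O[𝓟 (Set.Ici 1)]
      fun x => x ^ (-(δ / 4)) := by
  obtain ⟨C, hC0, hC⟩ := he.exists_nonneg
  rw [isBigOWith_principal] at hC
  have hT : LogPolyApprox fun x => summatory (fun n => a n / n) √x := by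
    simpa [div_eq_inv_mul] using (hS.summatory_log_pow_div ha₀ 0).comp_sqrt
  have hbound : (fun x => summatory (fun n => e (x / n) * (a n / n)) √x) =O[𝓟 (Set.Ici 1)]
      fun x => x ^ (-(δ / 2)) * summatory (fun n => a n / n) √x := by
    refine isBigO_principal.2 ⟨C, fun x (hx : 1 ≤ x) => ?_⟩
    have hx0 : 0 ≤ x := zero_le_one.trans hx
    have hweight : ∀ n : ℕ, 0 ≤ a n / n := fun n => div_nonneg (ha n) n.cast_nonneg
    rw [Real.norm_of_nonneg (mul_nonneg (Real.rpow_nonneg hx0 _) (summatory_nonneg hweight _)),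
      summatory, summatory, Finset.mul_sum, Finset.mul_sum]
    refine norm_sum_le_of_le _ fun n hn => ?_
    have hsqrt_le : √x ≤ x / n := sqrt_le_div_of_mem_Ioc hx0 hn
    have hone : 1 ≤ √x := Real.one_le_sqrt.2 hx
    rw [norm_mul, Real.norm_of_nonneg (hweight n), ← mul_assoc]
    refine mul_le_mul_of_nonneg_right ((hC _ (hone.trans hsqrt_le)).trans ?_) (hweight n)
    rw [Real.norm_of_nonneg (Real.rpow_nonneg (by positivity) _)]
    refine mul_le_mul_of_nonneg_left ?_ hC0
    calc (x / n) ^ (-δ) ≤ √x ^ (-δ) :=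
          Real.rpow_le_rpow_of_nonpos (by positivity) hsqrt_le (by linarith)
      _ = x ^ (-(δ / 2)) := by
          rw [Real.sqrt_eq_rpow, ← Real.rpow_mul hx0]
          ring_nf
  refine hbound.trans ?_
  rw [show -(δ / 4) = -(δ / 2) + δ / 4 by ring]
  exact ((isBigO_refl _ _).mul (hT.isBigO_rpow (by positivity))).trans_eventuallyEq
    (rpow_mul_rpow_eventuallyEq_Ici _ _)

lemma LogPolyApprox.summatory_comp_div {g : ℝ → ℝ} (hg : LogPolyApprox g) (ha₀ : a 0 = 0)
    (ha : ∀ n, 0 ≤ a n) (hS : LogPolyApprox fun x => summatory a x / x) :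
    LogPolyApprox fun x => summatory (fun n => g (x / n) * (a n / n)) √x := by
  obtain ⟨Q, δ, hδ, hQ⟩ := hg
  refine ((hS.summatory_eval_log_div ha₀ Q).add
    (of_isBigO (by positivity) (isBigO_summatory_comp_div ha₀ ha hS hδ hQ))).congr fun x _ => ?_
  rw [summatory, summatory, ← Finset.sum_add_distrib]
  exact Finset.sum_congr rfl fun n _ => by ring

end WeightedSum

section Hyperbola

variable {M : Type*} [AddCommMonoid M] {r s N : ℕ}

lemma sum_filter_fst_le_eq (F : ℕ → ℕ → M) (hr : r ≤ N) :
    ∑ p ∈ Ioc 0 N ×ˢ Ioc 0 N with p.1 * p.2 ≤ N ∧ p.1 ≤ r, F p.1 p.2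
      = ∑ n ∈ Ioc 0 r, ∑ m ∈ Ioc 0 (N / n), F n m := by
  refine Finset.sum_finset_product' _ _ _ fun p => ?_
  simp only [mem_filter, mem_product, mem_Ioc, mul_comm p.1]
  constructor
  · rintro ⟨⟨⟨hn, -⟩, hm, -⟩, hnm, hnr⟩
    exact ⟨⟨hn, hnr⟩, hm, (Nat.le_div_iff_mul_le hn).2 hnm⟩
  · rintro ⟨⟨hn, hnr⟩, hm, hmN⟩
    exact ⟨⟨⟨hn, hnr.trans hr⟩, hm, hmN.trans (Nat.div_le_self _ _)⟩,
      (Nat.le_div_iff_mul_le hn).1 hmN, hnr⟩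

lemma sum_filter_snd_le_eq (F : ℕ → ℕ → M) (hs : s ≤ N) :
    ∑ p ∈ Ioc 0 N ×ˢ Ioc 0 N with p.1 * p.2 ≤ N ∧ p.2 ≤ s, F p.1 p.2
      = ∑ m ∈ Ioc 0 s, ∑ n ∈ Ioc 0 (N / m), F n m := by
  rw [← sum_filter_fst_le_eq (fun m n => F n m) hs]
  refine Finset.sum_equiv (Equiv.prodComm ℕ ℕ) (fun p => ?_) fun _ _ => rfl
  simp only [mem_filter, mem_product, Equiv.prodComm_apply, Prod.fst_swap, Prod.snd_swap,
    mul_comm p.2, and_comm (a := p.1 ∈ _)]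

/-- Dirichlet's hyperbola method: every lattice point below the hyperbola `n m = N` lies in the
strip `n ≤ r` or in the strip `m ≤ s`, and the two strips share the rectangle `n ≤ r`, `m ≤ s`. -/
lemma sum_Ioc_mul_eq_hyperbola {R : Type*} [CommRing R] (f g : ArithmeticFunction R)
    (hrs : r * s ≤ N) (hN : N < (r + 1) * (s + 1)) (hr : r ≤ N) (hs : s ≤ N) :
    ∑ n ∈ Ioc 0 N, (f * g) n
      = ∑ n ∈ Ioc 0 r, f n * ∑ m ∈ Ioc 0 (N / n), g m
        + ∑ m ∈ Ioc 0 s, g m * ∑ n ∈ Ioc 0 (N / m), f n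
        - (∑ n ∈ Ioc 0 r, f n) * ∑ m ∈ Ioc 0 s, g m := by
  set P := Ioc 0 N ×ˢ Ioc 0 N
  set A := P.filter fun p => p.1 * p.2 ≤ N ∧ p.1 ≤ r
  set B := P.filter fun p => p.1 * p.2 ≤ N ∧ p.2 ≤ s
  have hunion : P.filter (fun p => p.1 * p.2 ≤ N) = A ∪ B := by
    rw [← Finset.filter_or]
    refine Finset.filter_congr fun p _ => ?_
    rw [← and_or_left, iff_self_and]
    intro hp
    by_contra! hlt
    exact hN.not_ge ((Nat.mul_le_mul hlt.1 hlt.2).trans hp)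
  have hinter : A ∩ B = Ioc 0 r ×ˢ Ioc 0 s := by
    ext p
    simp only [A, B, P, mem_inter, mem_filter, mem_product, mem_Ioc]
    constructor
    · rintro ⟨⟨⟨⟨hn, -⟩, hm, -⟩, -, hnr⟩, -, -, hms⟩
      exact ⟨⟨hn, hnr⟩, hm, hms⟩
    · rintro ⟨⟨hn, hnr⟩, hm, hms⟩
      have hP := And.intro (And.intro hn (hnr.trans hr)) (And.intro hm (hms.trans hs))
      have hle := (Nat.mul_le_mul hnr hms).trans hrs
      exact ⟨⟨hP, hle, hnr⟩, hP, hle, hms⟩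
  rw [ArithmeticFunction.sum_Ioc_mul_eq_sum_prod_filter, hunion, eq_sub_iff_add_eq,
    Finset.sum_mul_sum, ← Finset.sum_product', ← hinter, Finset.sum_union_inter,
    sum_filter_fst_le_eq (fun n m => f n * g m) hr, sum_filter_snd_le_eq (fun n m => f n * g m) hs]
  simp only [Finset.mul_sum, Finset.sum_mul, mul_comm (g _)]

end Hyperbola

lemma summatory_mul_div_eq (a b : ArithmeticFunction ℝ) {x : ℝ} (hx : 1 ≤ x) :
    summatory (a * b : ArithmeticFunction ℝ) x / x
      = summatory (fun n => summatory b (x / n) / (x / n) * (a n / n)) √x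
        + summatory (fun m => summatory a (x / m) / (x / m) * (b m / m)) √x
        - summatory a √x / √x * (summatory b √x / √x) := by
  have hx0 : 0 < x := zero_lt_one.trans_le hx
  have hsq : √x * √x = x := Real.mul_self_sqrt hx0.le
  have hlow : ⌊√x⌋₊ * ⌊√x⌋₊ ≤ ⌊x⌋₊ := by
    refine Nat.le_floor ?_
    rw [Nat.cast_mul]
    have hfloor := Nat.floor_le (Real.sqrt_nonneg x)
    exact (mul_self_le_mul_self (Nat.cast_nonneg _) hfloor).trans hsq.le
  have hhigh : ⌊x⌋₊ < (⌊√x⌋₊ + 1) * (⌊√x⌋₊ + 1) := by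
    rw [Nat.floor_lt hx0.le, Nat.cast_mul, Nat.cast_succ]
    have hfloor := Nat.lt_floor_add_one √x
    exact hsq.symm.le.trans_lt (mul_self_lt_mul_self (Real.sqrt_nonneg x) hfloor)
  have hle : ⌊√x⌋₊ ≤ ⌊x⌋₊ := (Nat.le_mul_self _).trans hlow
  have hterm : ∀ (c d : ArithmeticFunction ℝ),
      summatory (fun n => summatory d (x / n) / (x / n) * (c n / n)) √x
        = (∑ n ∈ Ioc 0 ⌊√x⌋₊, c n * ∑ m ∈ Ioc 0 (⌊x⌋₊ / n), d m) / x := fun c d => by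
    rw [summatory, Finset.sum_div]
    refine Finset.sum_congr rfl fun n hn => ?_
    have hn0 : (n : ℝ) ≠ 0 := Nat.cast_ne_zero.2 (Finset.mem_Ioc.1 hn).1.ne'
    rw [summatory, Nat.floor_div_natCast]
    field_simp
  rw [hterm, hterm, div_mul_div_comm, hsq, ← add_div, ← sub_div, summatory,
    sum_Ioc_mul_eq_hyperbola a b hlow hhigh hle hle]
  rfl

lemma LogPolyApprox.summatory_mul {a b : ArithmeticFunction ℝ} (ha : ∀ n, 0 ≤ a n)
    (hb : ∀ n, 0 ≤ b n)
    (hA : LogPolyApprox fun x => summatory a x / x)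
    (hB : LogPolyApprox fun x => summatory b x / x) :
    LogPolyApprox fun x => summatory (a * b : ArithmeticFunction ℝ) x / x :=
  (((hB.summatory_comp_div a.map_zero ha hA).add
    (hA.summatory_comp_div b.map_zero hb hB)).sub (hA.comp_sqrt.mul hB.comp_sqrt)).congr
      fun _ hx => (summatory_mul_div_eq a b hx).symm

lemma mul_apply_nonneg {a b : ArithmeticFunction ℝ} (ha : ∀ n, 0 ≤ a n) (hb : ∀ n, 0 ≤ b n)
    (n : ℕ) : 0 ≤ (a * b) n := by
  rw [ArithmeticFunction.mul_apply]
  exact Finset.sum_nonneg fun p _ => mul_nonneg (ha _) (hb _)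

lemma pow_apply_nonneg {a : ArithmeticFunction ℝ} (ha : ∀ n, 0 ≤ a n) (k n : ℕ) :
    0 ≤ (a ^ k) n := by
  induction k generalizing n with
  | zero =>
    rw [pow_zero, ArithmeticFunction.one_apply]
    positivity
  | succ k ih =>
    rw [pow_succ]
    exact mul_apply_nonneg ih ha n

lemma summatory_one {x : ℝ} (hx : 1 ≤ x) : summatory (1 : ArithmeticFunction ℝ) x = 1 := by
  rw [summatory, Finset.sum_eq_single_of_mem 1
    (Finset.mem_Ioc.2 ⟨one_pos, Nat.le_floor (by exact_mod_cast hx)⟩)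
    fun n _ hn => ArithmeticFunction.one_apply_ne hn, ArithmeticFunction.one_one]

lemma LogPolyApprox.summatory_pow {a : ArithmeticFunction ℝ} (ha : ∀ n, 0 ≤ a n)
    (hA : LogPolyApprox fun x => summatory a x / x) (k : ℕ) :
    LogPolyApprox fun x => summatory (a ^ k : ArithmeticFunction ℝ) x / x := by
  induction k with
  | zero =>
    refine (of_isBigO one_pos (isBigO_refl _ _)).congr fun x hx => ?_
    rw [pow_zero, summatory_one hx, Real.rpow_neg_one, one_div]
  | succ k ih =>
    rw [pow_succ]
    exact ih.summatory_mul (pow_apply_nonneg ha k) ha hA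

lemma summatory_zeta (x : ℝ) :
    summatory (ArithmeticFunction.zeta : ArithmeticFunction ℝ) x = ⌊x⌋₊ := by
  simp only [summatory, ArithmeticFunction.natCoe_apply]
  rw [← Nat.cast_sum, ArithmeticFunction.sum_Ioc_zeta]

lemma logPolyApprox_floor_div : LogPolyApprox fun x => (⌊x⌋₊ : ℝ) / x := by
  have hfract : (fun x : ℝ => (x - ⌊x⌋₊) / x) =O[𝓟 (Set.Ici 1)] fun x => x ^ (-1 : ℝ) := by
    refine isBigO_principal.2 ⟨1, fun x (hx : 1 ≤ x) => ?_⟩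
    have hx0 : 0 ≤ x := zero_le_one.trans hx
    rw [Real.rpow_neg_one, norm_div, norm_inv, one_mul, div_eq_mul_inv,
      Real.norm_of_nonneg (sub_nonneg.2 (Nat.floor_le hx0))]
    exact mul_le_of_le_one_left (by positivity) (by linarith [Nat.lt_floor_add_one x])
  refine ((LogPolyApprox.const 1).sub (.of_isBigO one_pos hfract)).congr fun x hx => ?_
  field_simp
  ring

lemma logPolyApprox_summatory_zeta_pow (k : ℕ) :
    LogPolyApprox fun x => summatory
      ((ArithmeticFunction.zeta : ArithmeticFunction ℝ) ^ k : ArithmeticFunction ℝ) x / x :=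
  .summatory_pow (fun n => by rw [ArithmeticFunction.natCoe_apply]; exact Nat.cast_nonneg _)
    (by simpa only [summatory_zeta] using logPolyApprox_floor_div) k

/-! ### Mellin transforms and logarithmic moments -/

section MellinStrip

variable {E : Type*} [NormedAddCommGroup E] {f : ℝ → E} {a b : ℝ}

/-- The standard growth conditions under which the Mellin transform of `f` is holomorphic in the
open strip `b < re s < a`. -/
structure MellinStrip (f : ℝ → E) (b a : ℝ) : Prop where
  locallyIntegrableOn : LocallyIntegrableOn f (Set.Ioi 0)
  isBigO_atTop : f =O[atTop] fun x => x ^ (-a)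
  isBigO_zero : f =O[𝓝[>] 0] fun x => x ^ (-b)

namespace MellinStrip

lemma indicator_Ioi_one (hm : AEStronglyMeasurable f)
    (hf : f =O[𝓟 (Set.Ici 1)] fun x => x ^ (-a)) (b : ℝ) :
    MellinStrip ((Set.Ioi 1).indicator f) b a where
  locallyIntegrableOn := by
    obtain ⟨C, hC0, hC⟩ := hf.exists_nonneg
    have hpow : ContinuousOn (fun x : ℝ => C * x ^ (-a)) (Set.Ioi 0) :=
      continuousOn_const.mul (continuousOn_id.rpow_const fun x hx => Or.inl (ne_of_gt hx))
    refine (hpow.locallyIntegrableOn measurableSet_Ioi).mono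
      (hm.indicator measurableSet_Ioi) (ae_of_all _ fun x => ?_)
    by_cases hx : x ∈ Set.Ioi (1 : ℝ)
    · rw [Set.indicator_of_mem hx, norm_mul, Real.norm_of_nonneg hC0]
      exact isBigOWith_principal.1 hC x (Set.Ioi_subset_Ici_self hx)
    · simp only [Set.indicator_of_notMem hx, norm_zero, norm_nonneg]
  isBigO_atTop := by
    refine (hf.mono (le_principal_iff.2 (Ici_mem_atTop 1))).congr' ?_ EventuallyEq.rfl
    filter_upwards [eventually_gt_atTop 1] with x hx
    exact (Set.indicator_of_mem (s := Set.Ioi 1) hx f).symm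
  isBigO_zero := by
    refine EventuallyEq.trans_isBigO ?_ (Asymptotics.isBigO_zero (E' := E) _ _)
    filter_upwards [nhdsWithin_le_nhds (Iio_mem_nhds zero_lt_one)] with x hx
    exact Set.indicator_of_notMem (Set.notMem_Ioi.2 (le_of_lt hx)) f

variable [NormedSpace ℂ E] {s : ℂ}

lemma log_smul {a' b' : ℝ} (hf : MellinStrip f b a) (hb : b < b') (ha : a' < a) :
    MellinStrip (fun x => Real.log x • f x) b' a' where
  locallyIntegrableOn := hf.locallyIntegrableOn.continuousOn_smul isOpen_Ioi.isLocallyClosed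
    (Real.continuousOn_log.mono fun _ hx => ne_of_gt hx)
  isBigO_atTop := isBigO_rpow_top_log_smul ha hf.isBigO_atTop
  isBigO_zero := isBigO_rpow_zero_log_smul hb hf.isBigO_zero

lemma mellinConvergent (hf : MellinStrip f b a) (hb : b < s.re) (ha : s.re < a) :
    MellinConvergent f s :=
  mellinConvergent_of_isBigO_rpow hf.locallyIntegrableOn hf.isBigO_atTop ha hf.isBigO_zero hb

lemma hasDerivAt_mellin (hf : MellinStrip f b a) (hb : b < s.re) (ha : s.re < a) :
    HasDerivAt (mellin f) (mellin (fun x => Real.log x • f x) s) s :=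
  (mellin_hasDerivAt_of_isBigO_rpow hf.locallyIntegrableOn hf.isBigO_atTop ha
    hf.isBigO_zero hb).2

lemma mellinConvergent_log_pow_smul (hf : MellinStrip f b a) (hb : b < s.re) (ha : s.re < a)
    (n : ℕ) : MellinConvergent (fun x => Real.log x ^ n • f x) s := by
  induction n generalizing f a b with
  | zero => simpa only [pow_zero, one_smul] using hf.mellinConvergent hb ha
  | succ n ih =>
    obtain ⟨b', hb', hbs⟩ := exists_between hb
    obtain ⟨a', hsa, ha'⟩ := exists_between ha
    simpa only [pow_succ, mul_smul] using ih (hf.log_smul hb' ha') hbs hsa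

lemma iteratedDeriv_mellin (hf : MellinStrip f b a) (hb : b < s.re) (ha : s.re < a) (n : ℕ) :
    iteratedDeriv n (mellin f) s = mellin (fun x => Real.log x ^ n • f x) s := by
  induction n generalizing f a b with
  | zero => simp only [iteratedDeriv_zero, pow_zero, one_smul]
  | succ n ih =>
    obtain ⟨b', hb', hbs⟩ := exists_between hb
    obtain ⟨a', hsa, ha'⟩ := exists_between ha
    have hderiv : deriv (mellin f) =ᶠ[𝓝 s] mellin fun x => Real.log x • f x := by
      filter_upwards [continuous_re.continuousAt.eventually (Ioo_mem_nhds hb ha)] with z hz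
      exact (hf.hasDerivAt_mellin hz.1 hz.2).deriv
    rw [iteratedDeriv_succ', hderiv.iteratedDeriv_eq, ih (hf.log_smul hb' ha') hbs hsa]
    simp only [pow_succ, mul_smul]

lemma analyticAt_mellin [CompleteSpace E] (hf : MellinStrip f b a) (hb : b < s.re)
    (ha : s.re < a) : AnalyticAt ℂ (mellin f) s :=
  DifferentiableOn.analyticAt (s := re ⁻¹' Set.Ioo b a)
    (fun _ hz => (hf.hasDerivAt_mellin hz.1 hz.2).differentiableAt.differentiableWithinAt)
    (continuous_re.continuousAt.preimage_mem_nhds (Ioo_mem_nhds hb ha))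

end MellinStrip

lemma mellin_indicator_Ioi_one [NormedSpace ℂ E] (f : ℝ → E) (s : ℂ) :
    mellin ((Set.Ioi 1).indicator f) s = ∫ x in Set.Ioi (1 : ℝ), (x : ℂ) ^ (s - 1) • f x := by
  simp only [mellin, ← Set.indicator_smul]
  rw [setIntegral_indicator measurableSet_Ioi,
    Set.inter_eq_right.2 (Set.Ioi_subset_Ioi zero_le_one)]

end MellinStrip

lemma mellinStrip_indicator_Ioi_one_one (b : ℝ) :
    MellinStrip ((Set.Ioi 1).indicator fun _ => (1 : ℂ)) b 0 :=
  .indicator_Ioi_one aestronglyMeasurable_const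
    (IsBigO.of_bound 1 (Eventually.of_forall fun x => by simp)) b

lemma mellin_indicator_Ioi_one_one {s : ℂ} (hs : s.re < 0) :
    mellin ((Set.Ioi 1).indicator fun _ => (1 : ℂ)) s = -s⁻¹ := by
  simp only [mellin_indicator_Ioi_one, smul_eq_mul, mul_one]
  rw [integral_Ioi_cpow_of_lt (by rwa [sub_re, one_re, sub_lt_iff_lt_add, neg_add_cancel]) one_pos]
  simp [neg_div]

lemma hasMellin_log_pow_indicator_Ioi_one (n : ℕ) {s : ℂ} (hs : s.re < 0) :
    HasMellin (fun x => Real.log x ^ n • (Set.Ioi 1).indicator (fun _ => (1 : ℂ)) x) s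
      (n.factorial / (-s) ^ (n + 1)) := by
  have hstrip := mellinStrip_indicator_Ioi_one_one (s.re - 1)
  have hb := sub_one_lt s.re
  refine ⟨hstrip.mellinConvergent_log_pow_smul hb hs n, ?_⟩
  have hinv : mellin ((Set.Ioi 1).indicator fun _ => (1 : ℂ)) =ᶠ[𝓝 s] fun z => -z⁻¹ := by
    filter_upwards [continuous_re.continuousAt.eventually (Iio_mem_nhds hs)] with z hz
    exact mellin_indicator_Ioi_one_one hz
  rw [← hstrip.iteratedDeriv_mellin hb hs, hinv.iteratedDeriv_eq, iteratedDeriv_fun_neg,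
    iteratedDeriv_eq_iterate, iter_deriv_inv]
  rw [show -1 - (n : ℤ) = -((n + 1 : ℕ) : ℤ) by push_cast; ring, zpow_neg, zpow_natCast,
    neg_pow s, div_mul_eq_div_div, div_eq_mul_inv _ (s ^ _), pow_succ (-1)]
  have hsign : ((-1 : ℂ) ^ n * -1)⁻¹ = (-1) ^ n * -1 := by
    rw [← pow_succ, ← inv_pow, inv_neg_one]
  rw [div_eq_mul_inv _ (_ * _), hsign]
  ring

/-! ### Taylor series and principal parts -/

section PrincipalPart

open Polynomial (C X)

/-- The polynomial `∑ b j * X ^ (n - 1 - j)` over `j < n`, that is, the principal part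
`∑ b j / X ^ (j + 1)` cleared of denominators by the factor `X ^ n`. -/
noncomputable def principalPartNumerator {R : Type*} [Semiring R] (b : ℕ → R) (n : ℕ) : R[X] :=
  ∑ j ∈ range n, C (b (n - 1 - j)) * X ^ j

lemma coeff_principalPartNumerator {R : Type*} [Semiring R] (b : ℕ → R) (n i : ℕ) :
    (principalPartNumerator b n).coeff i = if i < n then b (n - 1 - i) else 0 := by
  simp only [principalPartNumerator, Polynomial.finsetSum_coeff, Polynomial.coeff_C_mul_X_pow,
    Finset.sum_ite_eq, mem_range]

lemma eval_principalPartNumerator {K : Type*} [Field K] {x : K} (hx : x ≠ 0) (b : ℕ → K) (n : ℕ) :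
    (principalPartNumerator b n).eval x = x ^ n * ∑ j ∈ range n, b j / x ^ (j + 1) := by
  rw [principalPartNumerator, Polynomial.eval_finsetSum, Finset.mul_sum, ← Finset.sum_range_reflect]
  refine Finset.sum_congr rfl fun j hj => ?_
  have hj' : j + 1 ≤ n := mem_range.1 hj
  simp only [Polynomial.eval_mul, Polynomial.eval_C, Polynomial.eval_pow, Polynomial.eval_X]
  rw [Nat.sub_sub_self (by omega), show n = n - 1 - j + (j + 1) by omega]
  rw [show n - 1 - j + (j + 1) - 1 - j = n - 1 - j by omega, pow_add]
  field_simp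

end PrincipalPart

section TaylorSeries

open PowerSeries (coeff)

variable {𝕜 : Type*} [NontriviallyNormedField 𝕜] {f g : 𝕜 → 𝕜} {c : 𝕜}

/-- The formal Taylor series of `f` at `c`, in the variable `X = z - c`. -/
noncomputable def taylorSeries (f : 𝕜 → 𝕜) (c : 𝕜) : PowerSeries 𝕜 :=
  PowerSeries.mk fun n => iteratedDeriv n f c / n.factorial

lemma coeff_taylorSeries (n : ℕ) (f : 𝕜 → 𝕜) (c : 𝕜) :
    coeff n (taylorSeries f c) = iteratedDeriv n f c / n.factorial :=
  PowerSeries.coeff_mk n _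

lemma analyticAt_eval_sub (p : 𝕜[X]) (c : 𝕜) : AnalyticAt 𝕜 (fun z => p.eval (z - c)) c := by
  simp only [← Polynomial.coe_aeval_eq_eval]
  exact AnalyticAt.aeval_polynomial (by fun_prop) p

lemma taylorSeries_congr (h : f =ᶠ[𝓝 c] g) :
    taylorSeries f c = taylorSeries g c := by
  ext n
  rw [coeff_taylorSeries, coeff_taylorSeries, h.iteratedDeriv_eq]

variable [CompleteSpace 𝕜]

lemma taylorSeries_add (hf : AnalyticAt 𝕜 f c) (hg : AnalyticAt 𝕜 g c) :
    taylorSeries (f + g) c = taylorSeries f c + taylorSeries g c := by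
  ext n
  simp only [map_add, coeff_taylorSeries,
    iteratedDeriv_add hf.contDiffAt hg.contDiffAt, add_div]

variable [CharZero 𝕜]

lemma taylorSeries_mul (hf : AnalyticAt 𝕜 f c) (hg : AnalyticAt 𝕜 g c) :
    taylorSeries (f * g) c = taylorSeries f c * taylorSeries g c := by
  ext n
  simp only [PowerSeries.coeff_mul, coeff_taylorSeries]
  rw [iteratedDeriv_mul hf.contDiffAt hg.contDiffAt, Finset.sum_div,
    Finset.Nat.sum_antidiagonal_eq_sum_range_succ_mk]
  refine Finset.sum_congr rfl fun i hi => ?_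
  rw [Nat.cast_choose 𝕜 (Nat.lt_succ_iff.1 (mem_range.1 hi))]
  have h (m : ℕ) : (m.factorial : 𝕜) ≠ 0 := Nat.cast_ne_zero.2 m.factorial_ne_zero
  field_simp [h]

lemma taylorSeries_eval_sub (p : 𝕜[X]) (c : 𝕜) :
    taylorSeries (fun z => p.eval (z - c)) c = p := by
  have hX : taylorSeries (fun z => (Polynomial.X : 𝕜[X]).eval (z - c)) c = PowerSeries.X := by
    ext n
    rw [coeff_taylorSeries, PowerSeries.coeff_X]
    obtain (_ | _ | n) := n <;> simp [iteratedDeriv_succ', iteratedDeriv_const]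
  induction p using Polynomial.induction_on with
  | C a =>
    ext n
    rw [coeff_taylorSeries, Polynomial.coe_C, PowerSeries.coeff_C]
    cases n <;> simp [iteratedDeriv_const]
  | add p q ihp ihq =>
    rw [Polynomial.coe_add, ← ihp, ← ihq,
      ← taylorSeries_add (analyticAt_eval_sub p c) (analyticAt_eval_sub q c)]
    exact taylorSeries_congr (Eventually.of_forall fun z => Polynomial.eval_add)
  | monomial n a ih =>
    rw [pow_succ, ← mul_assoc, Polynomial.coe_mul, ← ih, Polynomial.coe_X, ← hX,
      ← taylorSeries_mul (analyticAt_eval_sub _ c) (analyticAt_eval_sub _ c)]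
    exact taylorSeries_congr (Eventually.of_forall fun z => Polynomial.eval_mul)

lemma taylorSeries_eq_of_laurent {W G : 𝕜 → 𝕜} {b : ℕ → 𝕜} {k d : ℕ} (hW : AnalyticAt 𝕜 W c)
    (hG : AnalyticAt 𝕜 G c) (h : ∃ᶠ z in 𝓝[≠] c,
      W z / (z - c) ^ k = G z + ∑ j ∈ range (k + d), b j / (z - c) ^ (j + 1)) :
    PowerSeries.X ^ d * taylorSeries W c = PowerSeries.X ^ (k + d) * taylorSeries G c
      + (principalPartNumerator b (k + d) : PowerSeries 𝕜) := by
  set P := principalPartNumerator b (k + d)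
  have hP := analyticAt_eval_sub P c
  have hX (n : ℕ) : AnalyticAt 𝕜 (fun z => (Polynomial.X ^ n : 𝕜[X]).eval (z - c)) c :=
    analyticAt_eval_sub _ c
  have hcoe (n : ℕ) : taylorSeries (fun z => (Polynomial.X ^ n : 𝕜[X]).eval (z - c)) c
      = PowerSeries.X ^ n := by
    rw [taylorSeries_eval_sub, Polynomial.coe_pow, Polynomial.coe_X]
  rw [← hcoe, ← hcoe, ← taylorSeries_eval_sub P c, ← taylorSeries_mul (hX d) hW,
    ← taylorSeries_mul (hX _) hG, ← taylorSeries_add ((hX _).mul hG) hP]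
  refine taylorSeries_congr ((((hX d).mul hW).frequently_eq_iff_eventually_eq
    (((hX _).mul hG).add hP)).1 (h.mp ?_))
  filter_upwards [self_mem_nhdsWithin] with z hz hWz
  have hzc : z - c ≠ 0 := sub_ne_zero.2 hz
  simp only [Pi.mul_apply, Pi.add_apply, Polynomial.eval_pow, Polynomial.eval_X]
  rw [eval_principalPartNumerator hzc, ← mul_add, ← hWz, pow_add]
  field_simp

end TaylorSeries

section Laurent

open PowerSeries (coeff)

variable {R : Type*} [Semiring R] {F G : PowerSeries R} {b : ℕ → R} {k d : ℕ}

lemma coeff_eq_of_laurent (h : PowerSeries.X ^ d * F = PowerSeries.X ^ (k + d) * G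
    + (principalPartNumerator b (k + d) : PowerSeries R)) (m : ℕ) :
    coeff m G = coeff (k + m) F := by
  have hm := congrArg (coeff (k + m + d)) h
  rw [map_add, PowerSeries.coeff_X_pow_mul, show k + m + d = m + (k + d) by omega,
    PowerSeries.coeff_X_pow_mul, Polynomial.coeff_coe, coeff_principalPartNumerator,
    if_neg (by omega), add_zero] at hm
  exact hm.symm

lemma eq_coeff_of_laurent (h : PowerSeries.X ^ d * F = PowerSeries.X ^ (k + d) * G
    + (principalPartNumerator b (k + d) : PowerSeries R)) {j : ℕ} (hj : j < k + d) :
    b j = if j < k then coeff (k - 1 - j) F else 0 := by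
  have hm := congrArg (coeff (k + d - 1 - j)) h
  rw [map_add, PowerSeries.coeff_X_pow_mul', PowerSeries.coeff_X_pow_mul',
    if_neg (show ¬k + d ≤ k + d - 1 - j by omega), zero_add, Polynomial.coeff_coe,
    coeff_principalPartNumerator, if_pos (show k + d - 1 - j < k + d by omega),
    Nat.sub_sub_self (by omega)] at hm
  rw [← hm, show k + d - 1 - j - d = k - 1 - j by omega]
  exact if_congr (by omega) rfl rfl

end Laurent

section DivisionById

open PowerSeries (coeff X)

lemma coeff_add_coeff_succ_of_one_add_X_mul {R : Type*} [Semiring R] {F G : PowerSeries R}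
    (h : (1 + X) * F = G) (i : ℕ) : coeff i F + coeff (i + 1) F = coeff (i + 1) G := by
  rw [← h, add_mul, one_mul, map_add, PowerSeries.coeff_succ_X_mul, add_comm]

lemma coeff_of_one_add_X_mul {R : Type*} [CommRing R] {F G : PowerSeries R}
    (h : (1 + X) * F = G) (i : ℕ) :
    coeff i F = (-1) ^ i * ∑ l ∈ range (i + 1), (-1) ^ l * coeff l G := by
  induction i with
  | zero => simp [← h, add_mul]
  | succ i ih =>
    have hsign : ((-1 : R) ^ (i + 1)) * (-1) ^ (i + 1) = 1 := by rw [← mul_pow]; simp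
    rw [eq_sub_of_add_eq' (coeff_add_coeff_succ_of_one_add_X_mul h i), ih,
      Finset.sum_range_succ _ (i + 1), mul_add, ← mul_assoc _ _ (coeff (i + 1) G), hsign]
    ring

lemma one_add_X_mul_taylorSeries_div_id {𝕜 : Type*} [NontriviallyNormedField 𝕜]
    [CompleteSpace 𝕜] [CharZero 𝕜] {H : 𝕜 → 𝕜} (hH : AnalyticAt 𝕜 H 1) :
    (1 + X) * taylorSeries (fun z => H z / z) 1 = taylorSeries H 1 := by
  have hX : taylorSeries (fun z => (1 + Polynomial.X : 𝕜[X]).eval (z - 1)) 1 = 1 + X := by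
    rw [taylorSeries_eval_sub, Polynomial.coe_add, Polynomial.coe_one, Polynomial.coe_X]
  have hdiv : AnalyticAt 𝕜 (fun z => H z / z) 1 := hH.fun_div analyticAt_id one_ne_zero
  rw [← hX, ← taylorSeries_mul (analyticAt_eval_sub _ 1) hdiv]
  refine taylorSeries_congr ?_
  filter_upwards [isOpen_ne.mem_nhds (one_ne_zero (α := 𝕜))] with z hz
  simp [mul_div_cancel₀ _ hz]

end DivisionById

/-! ### Dirichlet integrals -/

lemma hasMellin_sum {ι E : Type*} [NormedAddCommGroup E] [NormedSpace ℂ E] {f : ι → ℝ → E}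
    {m : ι → E} {t : Finset ι} {s : ℂ} (h : ∀ i ∈ t, HasMellin (f i) s (m i)) :
    HasMellin (fun x => ∑ i ∈ t, f i x) s (∑ i ∈ t, m i) := by
  simp only [HasMellin, mellin, MellinConvergent, Finset.smul_sum]
  refine ⟨integrable_finsetSum t fun i hi => (h i hi).1, ?_⟩
  rw [integral_finsetSum t fun i hi => (h i hi).1]
  exact Finset.sum_congr rfl fun i hi => (h i hi).2

lemma hasMellin_indicator_eval_log {Q : ℝ[X]} {N : ℕ} (hN : Q.natDegree < N) {s : ℂ}
    (hs : s.re < 0) :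
    HasMellin ((Set.Ioi 1).indicator fun x => ((Q.eval (Real.log x) : ℝ) : ℂ)) s
      (∑ j ∈ range N, ((j.factorial * Q.coeff j : ℝ) : ℂ) / (-s) ^ (j + 1)) := by
  have hsum : ((Set.Ioi 1).indicator fun x => ((Q.eval (Real.log x) : ℝ) : ℂ)) = fun x =>
      ∑ j ∈ range N, (Q.coeff j : ℂ) • Real.log x ^ j • (Set.Ioi 1).indicator (fun _ => 1) x := by
    funext x
    by_cases hx : x ∈ Set.Ioi (1 : ℝ)
    · simp [Set.indicator_of_mem hx, Polynomial.eval_eq_sum_range' hN]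
    · simp [Set.indicator_of_notMem hx]
  rw [hsum]
  refine hasMellin_sum fun j _ => ?_
  have hj := hasMellin_log_pow_indicator_Ioi_one j hs
  refine ⟨hj.1.const_smul _, ?_⟩
  rw [mellin_const_smul, hj.2, smul_eq_mul]
  push_cast
  ring

section DirichletIntegral

/-- The integral `∫ x in Set.Ioi 1, x ^ (-s) * g x`, written as a Mellin transform at `1 - s` so
that it has its poles where the Dirichlet series with summatory function `x * g x` has them. -/
noncomputable def dirichletIntegral (g : ℝ → ℝ) (s : ℂ) : ℂ :=
  mellin ((Set.Ioi 1).indicator fun x => (g x : ℂ)) (1 - s)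

lemma dirichletIntegral_eq_integral (g : ℝ → ℝ) (s : ℂ) :
    dirichletIntegral g s = ∫ x in Set.Ioi (1 : ℝ), (x : ℂ) ^ (-s) * g x := by
  rw [dirichletIntegral, mellin_indicator_Ioi_one, sub_sub_cancel_left]
  rfl

variable {g : ℝ → ℝ} {δ : ℝ} {s : ℂ}

lemma mellinStrip_indicator_ofReal (hg : Measurable g)
    (hO : g =O[𝓟 (Set.Ici 1)] fun x => x ^ (-δ)) (b : ℝ) :
    MellinStrip ((Set.Ioi 1).indicator fun x => (g x : ℂ)) b δ :=
  .indicator_Ioi_one (measurable_ofReal.comp hg).aestronglyMeasurable (isBigO_ofReal_left.2 hO) b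

lemma analyticAt_dirichletIntegral (hg : Measurable g)
    (hO : g =O[𝓟 (Set.Ici 1)] fun x => x ^ (-δ)) (hs : 1 - δ < s.re) :
    AnalyticAt ℂ (dirichletIntegral g) s := by
  have hstrip := mellinStrip_indicator_ofReal hg hO (-s.re)
  have hmellin := hstrip.analyticAt_mellin (s := 1 - s)
    (by rw [sub_re, one_re]; linarith) (by rw [sub_re, one_re]; linarith)
  exact hmellin.comp_of_eq (analyticAt_const.sub analyticAt_id) rfl

lemma log_pow_smul_indicator (g : ℝ → ℝ) (n : ℕ) :
    (fun x => Real.log x ^ n • (Set.Ioi 1).indicator (fun x => (g x : ℂ)) x)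
      = (Set.Ioi 1).indicator fun x => ((g x * Real.log x ^ n : ℝ) : ℂ) := by
  rw [← Set.indicator_smul]
  refine congrArg _ (funext fun x => ?_)
  rw [real_smul, ← ofReal_mul, mul_comm]

lemma integrableOn_mul_log_pow_div (hg : Measurable g)
    (hO : g =O[𝓟 (Set.Ici 1)] fun x => x ^ (-δ)) (hδ : 0 < δ) (n : ℕ) :
    IntegrableOn (fun x => g x * Real.log x ^ n / x) (Set.Ioi 1) := by
  have h := (mellinStrip_indicator_ofReal hg hO (-1)).mellinConvergent_log_pow_smul (s := 0)
    (by simp) (by simpa using hδ) n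
  rw [log_pow_smul_indicator] at h
  have h' : IntegrableOn (fun x => ((g x * Real.log x ^ n / x : ℝ) : ℂ)) (Set.Ioi 1) := by
    refine (h.mono_set (Set.Ioi_subset_Ioi zero_le_one)).congr_fun (fun x hx => ?_)
      measurableSet_Ioi
    simp [Set.indicator_of_mem hx, cpow_neg_one, div_eq_inv_mul]
  exact h'.re

lemma iteratedDeriv_dirichletIntegral_one (hg : Measurable g)
    (hO : g =O[𝓟 (Set.Ici 1)] fun x => x ^ (-δ)) (hδ : 0 < δ) (n : ℕ) :
    iteratedDeriv n (dirichletIntegral g) 1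
      = ((((-1) ^ n * ∫ x in Set.Ioi 1, g x * Real.log x ^ n / x : ℝ)) : ℂ) := by
  have hstrip := mellinStrip_indicator_ofReal hg hO (-1)
  change iteratedDeriv n (fun s => mellin _ (1 - s)) 1 = _
  rw [iteratedDeriv_comp_const_sub]
  simp only [sub_self]
  rw [hstrip.iteratedDeriv_mellin (by simp) (by simpa using hδ), log_pow_smul_indicator,
    mellin_indicator_Ioi_one, ofReal_mul, ← integral_complex_ofReal, smul_eq_mul]
  push_cast
  refine congrArg _ (setIntegral_congr_fun measurableSet_Ioi fun x _ => ?_)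
  simp [cpow_neg_one, div_eq_inv_mul]

end DirichletIntegral

lemma frequently_one_lt_re : ∃ᶠ s : ℂ in 𝓝[≠] 1, 1 < s.re := by
  have hmap : Tendsto (fun x : ℝ => (x : ℂ)) (𝓝[>] 1) (𝓝[≠] 1) := by
    refine tendsto_nhdsWithin_iff.2
      ⟨(continuous_ofReal.tendsto' 1 1 ofReal_one).mono_left nhdsWithin_le_nhds, ?_⟩
    filter_upwards [self_mem_nhdsWithin] with x hx
    exact fun h => ne_of_gt (Set.mem_Ioi.1 hx) (ofReal_eq_one.1 h)
  exact hmap.frequently (eventually_mem_nhdsWithin.frequently.mono fun x hx => by simpa using hx)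

section PolarPart

variable {f : ℝ → ℝ} {Q : ℝ[X]} {δ : ℝ} {W : ℂ → ℂ} {k d : ℕ}

lemma measurable_sub_eval_log (hf : Measurable f) :
    Measurable fun x => f x - Q.eval (Real.log x) :=
  hf.sub (Q.continuous.measurable.comp Real.measurable_log)

lemma dirichletIntegral_eq_add_principalPart (hf : Measurable f)
    (hO : (fun x => f x - Q.eval (Real.log x)) =O[𝓟 (Set.Ici 1)] fun x => x ^ (-δ))
    (hδ : 0 < δ) {N : ℕ} (hN : Q.natDegree < N) {s : ℂ} (hs : 1 < s.re) :
    dirichletIntegral f s = dirichletIntegral (fun x => f x - Q.eval (Real.log x)) s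
      + ∑ j ∈ range N, ((j.factorial * Q.coeff j : ℝ) : ℂ) / (s - 1) ^ (j + 1) := by
  have hre : (1 - s).re < 0 := by rw [sub_re, one_re]; linarith
  have hlog := hasMellin_indicator_eval_log hN hre
  have hrem := (mellinStrip_indicator_ofReal (measurable_sub_eval_log hf) hO
    (-s.re)).mellinConvergent (s := 1 - s) (by rw [sub_re, one_re]; linarith) (hre.trans hδ)
  have hadd := (hasMellin_add hrem hlog.1).2
  rw [hlog.2, neg_sub] at hadd
  rw [dirichletIntegral, dirichletIntegral, ← hadd]
  congr 1
  funext x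
  rw [← Pi.add_apply, ← Set.indicator_add']
  refine congrFun (congrArg _ (funext fun y => ?_)) x
  simp

lemma taylorSeries_dirichletIntegral (hf : Measurable f)
    (hO : (fun x => f x - Q.eval (Real.log x)) =O[𝓟 (Set.Ici 1)] fun x => x ^ (-δ))
    (hδ : 0 < δ) (hW : AnalyticAt ℂ W 1)
    (hfW : ∀ s : ℂ, 1 < s.re → dirichletIntegral f s = W s / (s - 1) ^ k)
    (hd : Q.natDegree < k + d) :
    PowerSeries.X ^ d * taylorSeries W 1 = PowerSeries.X ^ (k + d)
        * taylorSeries (dirichletIntegral fun x => f x - Q.eval (Real.log x)) 1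
      + (principalPartNumerator (fun j => ((j.factorial * Q.coeff j : ℝ) : ℂ)) (k + d) :
        PowerSeries ℂ) := by
  refine taylorSeries_eq_of_laurent hW (analyticAt_dirichletIntegral
    (measurable_sub_eval_log hf) hO (by rw [one_re]; linarith))
    (frequently_one_lt_re.mono fun s hs => ?_)
  rw [← hfW s hs, dirichletIntegral_eq_add_principalPart hf hO hδ hd hs]

lemma factorial_mul_coeff_eq (hf : Measurable f)
    (hO : (fun x => f x - Q.eval (Real.log x)) =O[𝓟 (Set.Ici 1)] fun x => x ^ (-δ))
    (hδ : 0 < δ) (hW : AnalyticAt ℂ W 1)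
    (hfW : ∀ s : ℂ, 1 < s.re → dirichletIntegral f s = W s / (s - 1) ^ k) (j : ℕ) :
    ((j.factorial * Q.coeff j : ℝ) : ℂ)
      = if j < k then PowerSeries.coeff (k - 1 - j) (taylorSeries W 1) else 0 :=
  eq_coeff_of_laurent (taylorSeries_dirichletIntegral hf hO hδ hW hfW
    (show Q.natDegree < k + (Q.natDegree + j + 1) by omega)) (by omega)

lemma integral_sub_mul_log_pow_div_eq (hf : Measurable f)
    (hO : (fun x => f x - Q.eval (Real.log x)) =O[𝓟 (Set.Ici 1)] fun x => x ^ (-δ))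
    (hδ : 0 < δ) (hW : AnalyticAt ℂ W 1)
    (hfW : ∀ s : ℂ, 1 < s.re → dirichletIntegral f s = W s / (s - 1) ^ k) (m : ℕ) :
    ((∫ x in Set.Ioi 1, (f x - Q.eval (Real.log x)) * Real.log x ^ m / x : ℝ) : ℂ)
      = (-1) ^ m * m.factorial * PowerSeries.coeff (k + m) (taylorSeries W 1) := by
  have hm : (m.factorial : ℂ) ≠ 0 := Nat.cast_ne_zero.2 m.factorial_ne_zero
  rw [← coeff_eq_of_laurent (taylorSeries_dirichletIntegral hf hO hδ hW hfW
    (show Q.natDegree < k + (Q.natDegree + 1) by omega)), coeff_taylorSeries,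
    iteratedDeriv_dirichletIntegral_one (measurable_sub_eval_log hf) hO hδ, mul_assoc,
    mul_div_cancel₀ _ hm]
  push_cast
  rw [← mul_assoc, ← mul_pow, neg_one_mul, neg_neg, one_pow, one_mul]

end PolarPart

lemma measurable_summatory_div (a : ℕ → ℝ) : Measurable fun x => summatory a x / x :=
  (measurable_summatory a).div measurable_id

lemma LSeries_eq_mul_dirichletIntegral {a : ℕ → ℝ} (ha : ∀ n, 0 ≤ a n) {r : ℝ} (hr : -1 ≤ r)
    (hO : (fun x => summatory a x / x) =O[𝓟 (Set.Ici 1)] fun x => x ^ r) {s : ℂ}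
    (hs : 1 + r < s.re) :
    LSeries (fun n => (a n : ℂ)) s = s * dirichletIntegral (fun x => summatory a x / x) s := by
  have hIcc (N : ℕ) : Icc 1 N = Ioc 0 N := Finset.Icc_add_one_left_eq_Ioc 0 N
  have hsum : (fun n : ℕ => ∑ j ∈ Icc 1 n, a j) =O[atTop] fun n => (n : ℝ) ^ (1 + r) := by
    obtain ⟨C, hC⟩ := isBigO_principal.1 hO
    refine IsBigO.of_bound C ?_
    filter_upwards [eventually_ge_atTop 1] with n hn
    have hn0 : (0 : ℝ) < n := by exact_mod_cast hn
    have h := hC n (Set.mem_Ici.2 (by exact_mod_cast hn))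
    rw [norm_div, Real.norm_of_nonneg hn0.le, div_le_iff₀ hn0] at h
    rw [add_comm, Real.rpow_add_one hn0.ne', norm_mul, Real.norm_of_nonneg hn0.le, ← mul_assoc]
    simpa only [summatory, Nat.floor_natCast, hIcc] using h
  rw [LSeries_eq_mul_integral_of_nonneg a (by linarith) hs hsum ha, dirichletIntegral_eq_integral]
  congr 1
  refine setIntegral_congr_fun measurableSet_Ioi fun x hx => ?_
  have hx0 : (x : ℂ) ≠ 0 := ofReal_ne_zero.2 (zero_lt_one.trans hx).ne'
  simp only [summatory, hIcc]
  rw [neg_add', cpow_sub _ _ hx0, cpow_one]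
  push_cast
  ring

/-! ### The Piltz divisor problem -/

section Laguerre

variable {α : Type*} [MeasurableSpace α] {μ : Measure α} {g u : α → ℝ}

lemma mul_laguerre (a : ℝ) (n : ℕ) (t : ℝ) :
    a * laguerre n t
      = ∑ j ∈ range (n + 1), (n.choose j : ℝ) * (-1) ^ j / j.factorial * (a * t ^ j) := by
  rw [laguerre, Finset.mul_sum]
  exact Finset.sum_congr rfl fun j _ => by ring

lemma integrable_mul_laguerre (h : ∀ m : ℕ, Integrable (fun x => g x * u x ^ m) μ) (n : ℕ) :
    Integrable (fun x => g x * laguerre n (u x)) μ := by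
  simp only [mul_laguerre]
  exact integrable_finsetSum _ fun j _ => (h j).const_mul _

lemma integral_mul_laguerre {c : ℕ → ℝ} (h : ∀ m : ℕ, Integrable (fun x => g x * u x ^ m) μ)
    (hc : ∀ m : ℕ, ∫ x, g x * u x ^ m ∂μ = (-1) ^ m * m.factorial * c m) (n : ℕ) :
    ∫ x, g x * laguerre n (u x) ∂μ = ∑ j ∈ range (n + 1), n.choose j * c j := by
  simp only [mul_laguerre]
  rw [integral_finsetSum _ fun j _ => (h j).const_mul _]
  refine Finset.sum_congr rfl fun j _ => ?_
  have hfac : (j.factorial : ℝ) ≠ 0 := Nat.cast_ne_zero.2 j.factorial_ne_zero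
  have hsign : ((-1 : ℝ) ^ j) * (-1) ^ j = 1 := by rw [← mul_pow]; norm_num
  rw [integral_const_mul, hc]
  field_simp
  rw [sq, hsign, mul_one]

end Laguerre

section Piltz

open PowerSeries (coeff)

lemma analyticAt_zetaPowAux (k : ℕ) : AnalyticAt ℂ (zetaPowAux k) 1 := by
  refine analyticAt_of_differentiable_on_punctured_nhds_of_continuousAt ?_ ?_
  · filter_upwards [self_mem_nhdsWithin] with s (hs : s ≠ 1)
    have hd : DifferentiableAt ℂ (fun s : ℂ => ((s - 1) * riemannZeta s) ^ k) s :=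
      ((differentiableAt_id.sub_const 1).mul (differentiableAt_riemannZeta hs)).pow k
    refine hd.congr_of_eventuallyEq ?_
    filter_upwards [isOpen_ne.mem_nhds hs] with z hz
    exact Function.update_of_ne hz _ _
  · rw [zetaPowAux, continuousAt_update_same]
    simpa using riemannZeta_residue_one.pow k

lemma analyticAt_zetaPowAux_div (k : ℕ) : AnalyticAt ℂ (fun s => zetaPowAux k s / s) 1 :=
  (analyticAt_zetaPowAux k).fun_div analyticAt_id one_ne_zero

lemma LSeriesHasSum_pow {f : ArithmeticFunction ℂ} {s z : ℂ}
    (hf : LSeriesHasSum (fun n => f n) s z) (k : ℕ) :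
    LSeriesHasSum (fun n => (f ^ k) n) s (z ^ k) := by
  induction k with
  | zero =>
    have h : LSeries.term (fun n => (1 : ArithmeticFunction ℂ) n) s
        = fun n => if n = 1 then 1 else 0 := by
      rw [ArithmeticFunction.one_eq_delta]
      exact funext (LSeries.term_delta s)
    rw [pow_zero, pow_zero, LSeriesHasSum, h]
    exact hasSum_ite_eq 1 1
  | succ k ih => simpa only [pow_succ] using ArithmeticFunction.LSeriesHasSum_mul ih hf

lemma natCast_dk {R : Type*} [CommSemiring R] (k n : ℕ) :
    (dk k n : R) = ((ArithmeticFunction.zeta : ArithmeticFunction R) ^ k) n := by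
  rw [dk, ← ArithmeticFunction.natCoe_apply]
  congr 1
  induction k with
  | zero => rw [pow_zero, pow_zero, ArithmeticFunction.natCoe_one]
  | succ k ih => rw [pow_succ, pow_succ, ArithmeticFunction.natCoe_mul, ih]

lemma LSeries_dk (k : ℕ) {s : ℂ} (hs : 1 < s.re) :
    LSeries (fun n => (dk k n : ℂ)) s = riemannZeta s ^ k := by
  simp only [natCast_dk]
  exact (LSeriesHasSum_pow (f := ArithmeticFunction.zeta)
    (ArithmeticFunction.LSeriesHasSum_zeta hs) k).LSeries_eq

lemma logPolyApprox_summatory_dk (k : ℕ) :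
    LogPolyApprox fun x => summatory (fun n => (dk k n : ℝ)) x / x := by
  simpa only [natCast_dk] using logPolyApprox_summatory_zeta_pow k

lemma dirichletIntegral_summatory_dk (k : ℕ) {s : ℂ} (hs : 1 < s.re) :
    dirichletIntegral (fun x => summatory (fun n => (dk k n : ℝ)) x / x) s
      = zetaPowAux k s / s / (s - 1) ^ k := by
  have hs0 : s ≠ 0 := fun h => by norm_num [h] at hs
  have hs1 : s ≠ 1 := fun h => by norm_num [h] at hs
  have hsk : (s - 1) ^ k ≠ 0 := pow_ne_zero k (sub_ne_zero.2 hs1)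
  obtain ⟨δ, hδ, hδs⟩ := exists_between (sub_pos.2 hs)
  have h := LSeries_eq_mul_dirichletIntegral (fun n => Nat.cast_nonneg (dk k n))
    (neg_one_lt_zero.trans hδ).le
    ((logPolyApprox_summatory_dk k).isBigO_rpow hδ) (s := s) (by linarith)
  simp only [ofReal_natCast, LSeries_dk k hs] at h
  rw [zetaPowAux, Function.update_of_ne hs1, mul_pow, h]
  field_simp

/-- The Taylor series at `1` of `(s - 1) ^ k * ζ(s) ^ k / s`. Its first `k` coefficients determine
the residue of `ζ(s) ^ k * x ^ s / s`, and the others the regular part of `ζ(s) ^ k / s`. -/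
noncomputable def zetaPowDivSeries (k : ℕ) : PowerSeries ℂ :=
  taylorSeries (fun s => zetaPowAux k s / s) 1

lemma re_coeff_taylorSeries_zetaPowAux (k j : ℕ) :
    (coeff j (taylorSeries (zetaPowAux k) 1)).re = lam k j / j.factorial := by
  rw [coeff_taylorSeries, div_natCast_re, lam]

lemma one_add_X_mul_zetaPowDivSeries (k : ℕ) :
    (1 + PowerSeries.X) * zetaPowDivSeries k = taylorSeries (zetaPowAux k) 1 :=
  one_add_X_mul_taylorSeries_div_id (analyticAt_zetaPowAux k)

lemma re_coeff_zetaPowDivSeries (k i : ℕ) : (coeff i (zetaPowDivSeries k)).re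
    = (-1) ^ i * ∑ l ∈ range (i + 1), (-1) ^ l * lam k l / l.factorial := by
  have hre (m : ℕ) (z : ℂ) : ((-1) ^ m * z).re = (-1) ^ m * z.re := by
    rw [show (-1 : ℂ) ^ m = (((-1) ^ m : ℝ) : ℂ) by push_cast; rfl, re_ofReal_mul]
  rw [coeff_of_one_add_X_mul (one_add_X_mul_zetaPowDivSeries k), hre, re_sum]
  simp only [hre, re_coeff_taylorSeries_zetaPowAux, mul_div_assoc]

lemma re_coeff_add_re_coeff_succ_zetaPowDivSeries (k i : ℕ) :
    (coeff i (zetaPowDivSeries k)).re + (coeff (i + 1) (zetaPowDivSeries k)).re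
      = lam k (i + 1) / (i + 1).factorial := by
  rw [← add_re, coeff_add_coeff_succ_of_one_add_X_mul (one_add_X_mul_zetaPowDivSeries k),
    re_coeff_taylorSeries_zetaPowAux]

lemma sum_choose_mul_re_coeff_zetaPowDivSeries (k n : ℕ) :
    ∑ j ∈ range (n + 1), (n.choose j : ℝ) * (coeff (k + j) (zetaPowDivSeries k)).re
      = (-1) ^ n * ell k n := by
  cases n with
  | zero => simp [ell, re_coeff_zetaPowDivSeries]
  | succ p =>
    have hsign : ((-1 : ℝ) ^ (p + 1)) * (-1) ^ (p + 1) = 1 := by rw [← mul_pow]; norm_num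
    rw [ell, if_pos (by simp), Int.toNat_natCast, ← mul_assoc, hsign, one_mul,
      Finset.sum_choose_succ_mul (fun j _ => (coeff (k + j) (zetaPowDivSeries k)).re),
      ← Finset.sum_add_distrib, ← Finset.Ico_succ_right_eq_Icc, Finset.sum_Ico_eq_sum_range]
    refine Finset.sum_congr rfl fun j _ => ?_
    rw [← mul_add, ← add_assoc k j 1, re_coeff_add_re_coeff_succ_zetaPowDivSeries,
      show 1 + j + k = k + j + 1 by omega, Nat.add_sub_cancel, Nat.add_sub_cancel_left,
      mul_div_assoc]

/-- The polynomial `P_k` of the main term `x * P_k(log x)` in the Piltz divisor problem. -/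
noncomputable def piltzPolynomial (k : ℕ) : ℝ[X] :=
  ∑ j ∈ range k, Polynomial.C (aCoef k j / j.factorial) * Polynomial.X ^ j

lemma coeff_piltzPolynomial (k j : ℕ) :
    (piltzPolynomial k).coeff j = if j < k then aCoef k j / j.factorial else 0 := by
  simp only [piltzPolynomial, Polynomial.finsetSum_coeff, Polynomial.coeff_C_mul_X_pow,
    Finset.sum_ite_eq, mem_range]

lemma Deltak_div_self (k : ℕ) {x : ℝ} (hx : x ≠ 0) :
    Deltak k x / x = summatory (fun n => (dk k n : ℝ)) x / x
      - (piltzPolynomial k).eval (Real.log x) := by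
  rw [Deltak, sub_div, mul_div_cancel_left₀ _ hx, piltzPolynomial, Polynomial.eval_finsetSum,
    summatory, ← Finset.Icc_add_one_left_eq_Ioc]
  simp

lemma exists_isBigO_summatory_dk_div_sub (k : ℕ) : ∃ δ : ℝ, 0 < δ ∧
    (fun x => summatory (fun n => (dk k n : ℝ)) x / x - (piltzPolynomial k).eval (Real.log x))
      =O[𝓟 (Set.Ici 1)] fun x => x ^ (-δ) := by
  obtain ⟨Q, δ, hδ, hO⟩ := logPolyApprox_summatory_dk k
  suffices hQ : piltzPolynomial k = Q from ⟨δ, hδ, hQ ▸ hO⟩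
  ext j
  have hQ := congrArg re (factorial_mul_coeff_eq (measurable_summatory_div _) hO hδ
    (analyticAt_zetaPowAux_div k)
    (fun s => dirichletIntegral_summatory_dk k) j)
  have hj : (j.factorial : ℝ) ≠ 0 := Nat.cast_ne_zero.2 j.factorial_ne_zero
  rw [ofReal_re, mul_comm, ← eq_div_iff hj] at hQ
  rw [hQ, coeff_piltzPolynomial]
  split_ifs
  · exact congrArg (· / _) (re_coeff_zetaPowDivSeries k _).symm
  · simp

lemma integrableOn_Deltak_div_sq_mul_log_pow (k m : ℕ) :
    IntegrableOn (fun x => Deltak k x / x ^ 2 * Real.log x ^ m) (Set.Ioi 1) := by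
  obtain ⟨δ, hδ, hO⟩ := exists_isBigO_summatory_dk_div_sub k
  refine (integrableOn_mul_log_pow_div (measurable_sub_eval_log
    (measurable_summatory_div _)) hO hδ m).congr_fun (fun x hx => ?_)
    measurableSet_Ioi
  beta_reduce
  rw [← Deltak_div_self k (zero_lt_one.trans hx).ne']
  ring

lemma integral_Deltak_div_sq_mul_log_pow (k m : ℕ) :
    ∫ x in Set.Ioi 1, Deltak k x / x ^ 2 * Real.log x ^ m
      = (-1) ^ m * m.factorial * (coeff (k + m) (zetaPowDivSeries k)).re := by
  obtain ⟨δ, hδ, hO⟩ := exists_isBigO_summatory_dk_div_sub k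
  have h := congrArg re (integral_sub_mul_log_pow_div_eq
    (measurable_summatory_div _) hO hδ
    (analyticAt_zetaPowAux_div k)
    (fun s => dirichletIntegral_summatory_dk k) m)
  rw [ofReal_re, show (-1 : ℂ) ^ m * m.factorial = (((-1) ^ m * m.factorial : ℝ) : ℂ) by
    push_cast; rfl, re_ofReal_mul] at h
  rw [zetaPowDivSeries, ← h]
  refine setIntegral_congr_fun measurableSet_Ioi fun x hx => ?_
  rw [← Deltak_div_self k (zero_lt_one.trans hx).ne']
  ring

end Piltz

theorem stmt3 (k : ℕ) (hk : 0 < k) (n : ℕ) :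
    IntegrableOn (fun x : ℝ => Deltak k x * laguerre n (Real.log x) / x ^ 2) (Set.Ioi 1) ∧
    ∫ x in Set.Ioi (1 : ℝ), Deltak k x * laguerre n (Real.log x) / x ^ 2
      = (-1 : ℝ) ^ n * ell k n := by
  have hmoment := integrableOn_Deltak_div_sq_mul_log_pow k
  simp only [mul_div_right_comm]
  refine ⟨integrable_mul_laguerre hmoment n, ?_⟩
  rw [integral_mul_laguerre hmoment (integral_Deltak_div_sq_mul_log_pow k),
    sum_choose_mul_re_coeff_zetaPowDivSeries]
end
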